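/- arXiv:1807.08899 — 3 statements merged into one kernel-verified Lean document; each statement's English description precedes it below -/
import Mathlib

section
/- Define a_n = (−1)^n / √(n·log n) for n ≥ 4 (where log is the natural logarithm). Then the partial sums ∑_{n=4}^{N} a_n converge to a finite limit as N → ∞, while the partial sums ∑_{n=4}^{N} log(1 + a_n) diverge to −∞; in particular, the partial products ∏_{n=4}^{N} (1 + a_n) tend to 0 as N → ∞. -/
open Filter

lemma aux_log_le (x : ℝ) (h1 : -1 < x) (h2 : x ≤ 1) :
    Real.log (1 + x) ≤ x - x ^ 2 / 9 := by
  have hp : 0 < 1 + x / 2 := by linarith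
  have hx : 0 < 1 + x := by linarith
  have e : 1 + x = (1 + x / 2) ^ 2 * ((1 + x) / (1 + x / 2) ^ 2) :=
    (mul_div_cancel₀ _ (pow_pos hp 2).ne').symm
  have l1 : Real.log (1 + x / 2) ≤ x / 2 := by
    have := Real.log_le_sub_one_of_pos hp
    linarith
  have l2 : Real.log ((1 + x) / (1 + x / 2) ^ 2) ≤ (1 + x) / (1 + x / 2) ^ 2 - 1 :=
    Real.log_le_sub_one_of_pos (by positivity)
  have l3 : (1 + x) / (1 + x / 2) ^ 2 ≤ 1 - x ^ 2 / 9 := by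
    rw [div_le_iff₀ (by positivity)]
    have : (1 + x / 2) ^ 2 ≤ 9 / 4 := by nlinarith
    nlinarith [mul_le_mul_of_nonneg_left this (sq_nonneg x)]
  rw [e, Real.log_mul (by positivity) (by positivity), Real.log_pow]
  push_cast
  linarith

lemma aux_log_one {n : ℕ} (hn : 4 ≤ n) : 1 < Real.log n := by
  have h4 : (4 : ℝ) ≤ n := by exact_mod_cast hn
  rw [Real.lt_log_iff_exp_lt (by linarith)]
  have := Real.exp_one_lt_d9
  linarith

lemma aux_small {n : ℕ} (hn : 4 ≤ n) :
    |(-1 : ℝ) ^ n / Real.sqrt (n * Real.log n)| < 1 := by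
  have h4 : (4 : ℝ) ≤ n := by exact_mod_cast hn
  have hl := aux_log_one hn
  have hs : 1 < Real.sqrt (n * Real.log n) := by
    rw [Real.lt_sqrt (by norm_num)]
    nlinarith
  rw [abs_div, abs_pow, abs_neg, abs_one, one_pow, abs_of_pos (by linarith),
    div_lt_one (by linarith)]
  exact hs

lemma aux_loglog {n : ℕ} (hn : 4 ≤ n) :
    Real.log (Real.log ((n + 1 : ℕ) : ℝ)) - Real.log (Real.log n) ≤ 1 / (n * Real.log n) := by
  have h4 : (4 : ℝ) ≤ n := by exact_mod_cast hn
  have hl := aux_log_one hn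
  have hl' := aux_log_one (n := n + 1) (by omega)
  rw [← Real.log_div (by linarith) (by linarith)]
  refine (Real.log_le_sub_one_of_pos (div_pos (by linarith) (by linarith))).trans ?_
  have h : Real.log ((n + 1 : ℕ) : ℝ) - Real.log n ≤ 1 / n := by
    rw [← Real.log_div (by positivity) (by positivity)]
    refine (Real.log_le_sub_one_of_pos (by positivity)).trans (le_of_eq ?_)
    push_cast
    field_simp
    ring
  have e : Real.log ((n + 1 : ℕ) : ℝ) / Real.log n - 1
      = (Real.log ((n + 1 : ℕ) : ℝ) - Real.log n) / Real.log n := by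
    field_simp
  rw [e, ← div_div]
  gcongr

lemma aux_bound (N : ℕ) (hN : 3 ≤ N) :
    ∑ n ∈ Finset.Icc 4 N, Real.log (1 + (-1 : ℝ) ^ n / Real.sqrt (n * Real.log n)) ≤
      (∑ n ∈ Finset.Icc 4 N, ((-1 : ℝ) ^ n / Real.sqrt (n * Real.log n))) +
      -((Real.log (Real.log ((N + 1 : ℕ) : ℝ)) - Real.log (Real.log 4)) / 9) := by
  induction N, hN using Nat.le_induction with
  | base => norm_num
  | succ N hN ih =>
    rw [Finset.sum_Icc_succ_top (by omega), Finset.sum_Icc_succ_top (by omega)]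
    have h4 : 4 ≤ N + 1 := by omega
    have hs := abs_lt.1 (aux_small h4)
    have h1 := aux_log_le _ hs.1 hs.2.le
    have h2 := aux_loglog h4
    have hl := aux_log_one h4
    have h3 : ((-1 : ℝ) ^ (N + 1) / Real.sqrt ((N + 1 : ℕ) * Real.log (N + 1 : ℕ))) ^ 2
        = 1 / ((N + 1 : ℕ) * Real.log (N + 1 : ℕ)) := by
      rw [div_pow, Real.sq_sqrt (by positivity), ← pow_mul, mul_comm (N + 1) 2, pow_mul]
      norm_num
    rw [h3] at h1
    linarith

lemma aux_conv : ∃ L : ℝ, Tendsto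
    (fun N : ℕ => ∑ n ∈ Finset.Icc 4 N, ((-1 : ℝ) ^ n / Real.sqrt (n * Real.log n)))
    atTop (nhds L) := by
  let f : ℕ → ℝ := fun k => 1 / Real.sqrt ((4 + k : ℕ) * Real.log (4 + k : ℕ))
  have hf : Antitone f := by
    intro a b hab
    have h1 := aux_log_one (n := 4 + a) (by omega)
    have hc : ((4 + a : ℕ) : ℝ) ≤ (4 + b : ℕ) := by exact_mod_cast (by omega)
    have hp : (0 : ℝ) < (4 + a : ℕ) := by positivity
    have hl := Real.log_le_log hp hc
    apply one_div_le_one_div_of_le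
    · exact Real.sqrt_pos.2 (mul_pos hp (by linarith))
    · exact Real.sqrt_le_sqrt (mul_le_mul hc hl (by linarith) (by linarith))
  have hshift : Tendsto (fun k : ℕ => ((4 + k : ℕ) : ℝ)) atTop atTop :=
    tendsto_natCast_atTop_atTop.comp (tendsto_atTop_mono (fun k => by simp only [id]; omega) tendsto_id)
  have h0 : Tendsto f atTop (nhds 0) := by
    simp only [f, one_div]
    exact tendsto_inv_atTop_zero.comp (Real.tendsto_sqrt_atTop.comp
      (hshift.atTop_mul_atTop₀ (Real.tendsto_log_atTop.comp hshift)))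
  obtain ⟨L, hL⟩ := hf.tendsto_alternating_series_of_tendsto_zero h0
  refine ⟨L, ?_⟩
  have ht : Tendsto (fun N : ℕ => N + 1 - 4) atTop atTop :=
    (tendsto_sub_atTop_nat 4).comp (tendsto_add_atTop_nat 1)
  refine (hL.comp ht).congr fun N => ?_
  have : Finset.Icc 4 N = Finset.Ico 4 (N + 1) := by
    ext; simp
  rw [this, Finset.sum_Ico_eq_sum_range]
  refine Finset.sum_congr rfl fun k _ => ?_
  simp only [f, pow_add]
  norm_num [div_eq_mul_inv]

/-- With `aₙ = (−1)ⁿ/√(n log n)` for `n ≥ 4`, the partial sums `∑ aₙ` converge,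
the partial sums `∑ log(1+aₙ)` diverge to `−∞`, and the partial products
`∏ (1+aₙ)` tend to `0`. -/
theorem counterexample_sum_converges_prod_diverges :
    (∃ L : ℝ, Tendsto
        (fun N : ℕ => ∑ n ∈ Finset.Icc 4 N, ((-1 : ℝ) ^ n / Real.sqrt (n * Real.log n)))
        atTop (nhds L)) ∧
    Tendsto
        (fun N : ℕ => ∑ n ∈ Finset.Icc 4 N,
          Real.log (1 + (-1 : ℝ) ^ n / Real.sqrt (n * Real.log n)))
        atTop atBot ∧
    Tendsto
        (fun N : ℕ => ∏ n ∈ Finset.Icc 4 N, (1 + (-1 : ℝ) ^ n / Real.sqrt (n * Real.log n)))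
        atTop (nhds 0) := by
  have hlog : Tendsto
        (fun N : ℕ => ∑ n ∈ Finset.Icc 4 N,
          Real.log (1 + (-1 : ℝ) ^ n / Real.sqrt (n * Real.log n)))
        atTop atBot := by
    obtain ⟨L, hL⟩ := aux_conv
    have hshift : Tendsto (fun k : ℕ => ((k + 1 : ℕ) : ℝ)) atTop atTop :=
      tendsto_natCast_atTop_atTop.comp (tendsto_add_atTop_nat 1)
    have hll : Tendsto (fun N : ℕ => Real.log (Real.log ((N + 1 : ℕ) : ℝ))) atTop atTop :=
      Real.tendsto_log_atTop.comp (Real.tendsto_log_atTop.comp hshift)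
    have h1 : Tendsto (fun N : ℕ =>
        -((Real.log (Real.log ((N + 1 : ℕ) : ℝ)) - Real.log (Real.log 4)) / 9)) atTop atBot :=
      tendsto_neg_atTop_atBot.comp
        ((tendsto_atTop_add_const_right _ (-Real.log (Real.log 4)) hll).atTop_div_const
          (by norm_num))
    refine tendsto_atBot_mono' _ ?_ (hL.add_atBot h1)
    filter_upwards [eventually_ge_atTop 3] with N hN using aux_bound N hN
  refine ⟨aux_conv, hlog, ?_⟩
  refine (Real.tendsto_exp_atBot.comp hlog).congr fun N => ?_
  simp only [Function.comp]
  rw [Real.exp_sum]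
  refine Finset.prod_congr rfl fun n hn => Real.exp_log ?_
  have := abs_lt.1 (aux_small (Finset.mem_Icc.1 hn).1)
  linarith [this.1]
end

section
/- Prime Number Theorem for Arithmetic Progressions: if a and b are relatively prime natural numbers and π_{a,b}(x) denotes the number of primes p ≤ x with p ≡ b (mod a), then π_{a,b}(x) ∼ Li(x)/φ(a) as x → ∞; that is, π_{a,b}(x) divided by (1/φ(a))·∫₂^x dt/log t tends to 1. -/
open Filter Topology MeasureTheory FourierTransform Convolution

lemma fourier_conj_of_real (η : ℝ → ℝ) (u : ℝ) :
    (starRingEnd ℂ) (𝓕 (fun x => (η x : ℂ)) u) = 𝓕 (fun x => (η (-x) : ℂ)) u := by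
  have h := congrFun (Real.fourierInv_eq_fourier_comp_neg (fun x => (η x : ℂ))) u
  rw [← h, Real.fourier_real_eq_integral_exp_smul, Real.fourierInv_eq', ← integral_conj]
  congr 1
  ext v
  simp only [smul_eq_mul, map_mul, Complex.conj_ofReal, ← Complex.exp_conj]
  congr 2
  simp
  ring

lemma exists_kernel_aux : ∃ (φ : ℝ → ℂ) (K : ℝ → ℝ), Continuous φ ∧ HasCompactSupport φ ∧
    (∀ u, 𝓕 φ u = (K u : ℂ)) ∧ (∀ u, 0 ≤ K u) ∧ Integrable K ∧ 0 < ∫ u, K u := by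
  let f : ContDiffBump (0:ℝ) := ⟨1, 2, by norm_num, by norm_num⟩
  let η : ℝ → ℂ := fun x => (f x : ℂ)
  have hηc : HasCompactSupport η := f.hasCompactSupport.comp_left (g := fun x : ℝ => (x:ℂ)) (by simp)
  have hηs : ContDiff ℝ (⊤ : ℕ∞) η := Complex.ofRealCLM.contDiff.comp f.contDiff
  have hηcont : Continuous η := hηs.continuous
  have hηi : Integrable η := hηcont.integrable_of_hasCompactSupport hηc
  let ηS : SchwartzMap ℝ ℂ := hηc.toSchwartzMap hηs
  have hηS : ∀ u, (𝓕 ηS) u = 𝓕 η u := by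
    intro u
    rw [SchwartzMap.fourier_coe]; rfl
  have hconj : ∀ u, (starRingEnd ℂ) (𝓕 η u) = 𝓕 η u := by
    intro u
    have := fourier_conj_of_real (fun x => f x) u
    simp only [ContDiffBump.neg] at this
    exact this
  set φ : ℝ → ℂ := η ⋆[ContinuousLinearMap.mul ℂ ℂ] η with hφ
  have hφc : Continuous φ := hηc.continuous_convolution_left _ hηcont hηi.locallyIntegrable
  have hφs : HasCompactSupport φ := hηc.convolution _ hηc
  set K : ℝ → ℝ := fun u => ‖𝓕 η u‖^2 with hK
  have hKf : ∀ u, 𝓕 φ u = (K u : ℂ) := by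
    intro u
    rw [hφ, Real.fourier_mul_convolution_eq hηi hηi]
    nth_rewrite 1 [← hconj u]
    rw [mul_comm, Complex.mul_conj, hK, Complex.normSq_eq_norm_sq]
  have hcontF : Continuous (𝓕 η) := by
    have := (𝓕 ηS).continuous
    simpa [funext hηS] using this
  have hKi : Integrable K := by
    have h1 : Integrable (𝓕 η) := by
      have := (𝓕 ηS).integrable (μ := volume)
      refine this.congr ?_
      filter_upwards with u using hηS u
    have h2 : ∀ u, ‖𝓕 η u‖ ≤ ∫ x, ‖η x‖ := fun u => by
      exact VectorFourier.norm_fourierIntegral_le_integral_norm _ _ _ _ _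
    have := h1.norm.bdd_mul (c := ∫ x, ‖η x‖) hcontF.norm.aestronglyMeasurable (by
      filter_upwards with u
      simpa using h2 u)
    refine this.congr ?_
    filter_upwards with u
    simp [hK, pow_two]
  have hpos : 0 < ∫ u, K u := by
    have hK0 : K 0 ≠ 0 := by
      have : 𝓕 η 0 = ((∫ x, f x : ℝ) : ℂ) := by
        rw [Real.fourier_real_eq]
        simp [η, integral_complex_ofReal]
      have h3 : 0 < ∫ x, f x := f.integral_pos
      simp only [hK, this]
      simp [h3.ne']
    have hKc : Continuous K := by fun_prop
    rw [integral_pos_iff_support_of_nonneg (fun u => by positivity) hKi]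
    exact (hKc.isOpen_support).measure_pos _ ⟨0, hK0⟩
  exact ⟨φ, K, hφc, hφs, hKf, fun u => by positivity, hKi, hpos⟩

lemma exists_kernel : ∃ (φ : ℝ → ℂ) (K : ℝ → ℝ), Continuous φ ∧ HasCompactSupport φ ∧
    (∀ u, 𝓕 φ u = (K u : ℂ)) ∧ (∀ u, 0 ≤ K u) ∧ Integrable K ∧ ∫ u, K u = 1 := by
  obtain ⟨φ, K, hφc, hφs, hKf, hK0, hKi, hpos⟩ := exists_kernel_aux
  set I := ∫ u, K u
  refine ⟨fun x => ((I⁻¹ : ℝ) : ℂ) • φ x, fun u => I⁻¹ * K u, by fun_prop, ?_, ?_, ?_, ?_, ?_⟩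
  · exact hφs.smul_left (f := fun _ => ((I⁻¹ : ℝ) : ℂ))
  · intro u
    have : 𝓕 (fun x => ((I⁻¹ : ℝ) : ℂ) • φ x) u = ((I⁻¹ : ℝ) : ℂ) • 𝓕 φ u := by
      rw [Real.fourier_real_eq, Real.fourier_real_eq, ← integral_smul]
      congr 1; ext v; rw [smul_comm]
    rw [this, hKf]; push_cast; simp
  · intro u
    have := hK0 u
    have := hpos.le
    positivity
  · exact hKi.const_mul _
  · rw [integral_const_mul]; exact inv_mul_cancel₀ hpos.ne'

lemma fourier_scale (φ : ℝ → ℂ) (l : ℝ) (hl : 0 < l) (u : ℝ) :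
    𝓕 (fun x => φ (x / l)) u = l * 𝓕 φ (l * u) := by
  rw [Real.fourier_real_eq, Real.fourier_real_eq]
  have := Measure.integral_comp_div (fun v => Real.fourierChar (-(v * (l*u))) • φ v) l
  rw [abs_of_pos hl] at this
  rw [Complex.real_smul] at this
  rw [← this]
  congr 1; ext v
  congr 3
  field_simp

lemma fourier_modulate (φ : ℝ → ℂ) (y u : ℝ) :
    𝓕 (fun x => Real.fourierChar (y * x) • φ x) u = 𝓕 φ (u - y) := by
  rw [Real.fourier_real_eq, Real.fourier_real_eq]
  congr 1; ext v
  rw [smul_smul, ← AddChar.map_add_eq_mul]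
  congr 2; ring

lemma tauber_limit (B : ℝ → ℝ) (hBm : Measurable B) (C : ℝ) (hB : ∀ u, |B u| ≤ C)
    (hB0 : ∀ u < 0, B u = 0) (H : ℂ → ℂ) (hHc : ContinuousOn H {s | 1 ≤ s.re})
    (hH : ∀ δ : ℝ, 0 < δ → ∀ ξ : ℝ, 𝓕 (fun u : ℝ => ((B u * Real.exp (-δ * u) : ℝ) : ℂ)) ξ =
      H (1 + δ + 2 * Real.pi * ξ * Complex.I))
    (φ : ℝ → ℂ) (hφc : Continuous φ) (hφs : HasCompactSupport φ) (hφi : Integrable (𝓕 φ)) :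
    Tendsto (fun y : ℝ => ∫ u, (B u : ℂ) * 𝓕 φ (u - y)) atTop (𝓝 0) := by
  have hC : 0 ≤ C := (abs_nonneg _).trans (hB 0)
  have hφint : Integrable φ := hφc.integrable_of_hasCompactSupport hφs
  have hfi : ∀ δ : ℝ, 0 < δ → Integrable (fun u : ℝ => ((B u * Real.exp (-δ * u) : ℝ) : ℂ)) := by
    intro δ hδ
    suffices hh : Integrable (fun u : ℝ => B u * Real.exp (-δ * u)) from hh.ofReal
    have h1 : IntegrableOn (fun u : ℝ => Real.exp (-δ * u)) (Set.Ici 0) := by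
      rw [integrableOn_Ici_iff_integrableOn_Ioi]
      exact integrableOn_exp_mul_Ioi (by linarith) 0
    have h2 := (h1.integrable_indicator measurableSet_Ici).const_mul C
    refine h2.mono' (by fun_prop) ?_
    filter_upwards with u
    rcases lt_or_ge u 0 with hu | hu
    · simp [hB0 u hu, Set.indicator, not_le.2 hu]
    · simp only [norm_mul, Real.norm_eq_abs, Real.abs_exp]
      rw [Set.indicator_of_mem (by exact hu)]
      gcongr
      exact hB u
  have hcont : ∀ δ : ℝ, 0 ≤ δ → Continuous (fun ξ : ℝ => H (1 + δ + 2 * Real.pi * ξ * Complex.I)) := by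
    intro δ hδ
    refine hHc.comp_continuous (by fun_prop) ?_
    intro ξ
    simp [hδ]
  have key : ∀ y : ℝ, ∫ u, (B u : ℂ) * 𝓕 φ (u - y) =
      ∫ ξ : ℝ, Real.fourierChar (-(ξ * (-y))) • (H (1 + 2 * Real.pi * ξ * Complex.I) * φ ξ) := by
    intro y
    have hψi : Integrable (fun x => Real.fourierChar (y * x) • φ x) := by
      have := (Real.fourierIntegral_convergent_iff (μ := volume) (f := φ) (-y)).2 hφint
      refine this.congr ?_
      filter_upwards with v
      simp
    have heq : ∀ δ : ℝ, 0 < δ →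
        ∫ u, ((B u * Real.exp (-δ * u) : ℝ) : ℂ) * 𝓕 φ (u - y) =
        ∫ ξ : ℝ, H (1 + δ + 2 * Real.pi * ξ * Complex.I) * (Real.fourierChar (y * ξ) • φ ξ) := by
      intro δ hδ
      have := VectorFourier.integral_fourierIntegral_smul_eq_flip (μ := volume) (ν := volume)
        (L := innerₗ ℝ) Real.continuous_fourierChar continuous_inner (hfi δ hδ) hψi
      have e1 : ∀ ξ, VectorFourier.fourierIntegral Real.fourierChar volume (innerₗ ℝ)
          (fun u : ℝ => ((B u * Real.exp (-δ * u) : ℝ) : ℂ)) ξ = H (1 + δ + 2 * Real.pi * ξ * Complex.I) :=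
        fun ξ => hH δ hδ ξ
      have e2 : ∀ u, VectorFourier.fourierIntegral Real.fourierChar volume (innerₗ ℝ).flip
          (fun x => Real.fourierChar (y * x) • φ x) u = 𝓕 φ (u - y) := by
        intro u
        rw [flip_innerₗ]
        exact fourier_modulate φ y u
      simp only [e1, e2, smul_eq_mul] at this
      exact this.symm
    have t1 : Tendsto (fun δ : ℝ => ∫ u, ((B u * Real.exp (-δ * u) : ℝ) : ℂ) * 𝓕 φ (u - y))
        (𝓝[>] 0) (𝓝 (∫ u, (B u : ℂ) * 𝓕 φ (u - y))) := by
      have hφi' : Integrable (fun u => 𝓕 φ (u - y)) := hφi.comp_sub_right y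
      refine tendsto_integral_filter_of_dominated_convergence (fun u => C * ‖𝓕 φ (u - y)‖) ?_ ?_ ?_ ?_
      · filter_upwards with δ
        exact (by fun_prop : Measurable (fun u => ((B u * Real.exp (-δ * u) : ℝ) : ℂ))).aestronglyMeasurable.mul
          hφi'.aestronglyMeasurable
      · filter_upwards [self_mem_nhdsWithin] with δ hδ
        filter_upwards with u
        rw [norm_mul, Complex.norm_real, norm_mul, Real.norm_eq_abs]
        gcongr
        rcases lt_or_ge u 0 with hu | hu
        · simp [hB0 u hu, hC]
        · have : Real.exp (-δ * u) ≤ 1 := by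
            rw [Real.exp_le_one_iff]
            have : 0 < δ := hδ
            nlinarith
          rw [Real.norm_eq_abs, Real.abs_exp]
          calc |B u| * Real.exp (-δ * u) ≤ C * 1 := by
                gcongr
                exact hB u
            _ = C := mul_one C
      · exact hφi'.norm.const_mul C
      · filter_upwards with u
        have : Tendsto (fun δ : ℝ => ((B u * Real.exp (-δ * u) : ℝ) : ℂ) * 𝓕 φ (u - y)) (𝓝 0)
            (𝓝 (((B u * Real.exp (-0 * u) : ℝ) : ℂ) * 𝓕 φ (u - y))) := by
          apply Continuous.tendsto (by fun_prop : Continuous (fun δ : ℝ => ((B u * Real.exp (-δ * u) : ℝ) : ℂ) * 𝓕 φ (u - y)))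
        simp only [neg_zero, zero_mul, Real.exp_zero, mul_one] at this
        exact this.mono_left nhdsWithin_le_nhds
    have t2 : Tendsto (fun δ : ℝ => ∫ ξ : ℝ, H (1 + δ + 2 * Real.pi * ξ * Complex.I) *
          (Real.fourierChar (y * ξ) • φ ξ)) (𝓝[>] 0)
        (𝓝 (∫ ξ : ℝ, H (1 + 2 * Real.pi * ξ * Complex.I) * (Real.fourierChar (y * ξ) • φ ξ))) := by
      have hcpt : IsCompact ((fun p : ℝ × ℝ => (1 + p.1 + 2 * Real.pi * p.2 * Complex.I : ℂ)) ''
          (Set.Icc 0 1 ×ˢ tsupport φ)) :=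
        (isCompact_Icc.prod hφs).image (by fun_prop)
      obtain ⟨M, hM⟩ := hcpt.exists_bound_of_continuousOn (hHc.mono (by
        rintro _ ⟨p, ⟨hp1, hp2⟩, rfl⟩
        simpa using hp1.1))
      refine tendsto_integral_filter_of_dominated_convergence (fun ξ => M * ‖φ ξ‖) ?_ ?_ ?_ ?_
      · filter_upwards [self_mem_nhdsWithin] with δ hδ
        exact (hcont δ (le_of_lt hδ)).aestronglyMeasurable.mul hψi.aestronglyMeasurable
      · filter_upwards [Ioc_mem_nhdsGT (zero_lt_one' ℝ)] with δ hδ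
        filter_upwards with ξ
        rw [norm_mul, Circle.norm_smul]
        by_cases h : φ ξ = 0
        · simp [h]
        · gcongr
          refine hM _ ⟨(δ, ξ), ⟨⟨hδ.1.le, hδ.2⟩, subset_tsupport _ h⟩, rfl⟩
      · exact hφint.norm.const_mul M
      · filter_upwards with ξ
        refine Tendsto.mul_const _ ?_
        have h1 : ContinuousWithinAt H {s | 1 ≤ s.re} (1 + 2 * Real.pi * ξ * Complex.I) :=
          hHc _ (by simp)
        refine h1.tendsto.comp (tendsto_nhdsWithin_iff.2 ⟨?_, ?_⟩)
        · have : Tendsto (fun δ : ℝ => (1 + δ + 2 * Real.pi * ξ * Complex.I : ℂ)) (𝓝 0)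
              (𝓝 (1 + (0:ℝ) + 2 * Real.pi * ξ * Complex.I : ℂ)) :=
            Continuous.tendsto (by fun_prop : Continuous (fun δ : ℝ => (1 + δ + 2 * Real.pi * ξ * Complex.I : ℂ))) 0
          simp only [Complex.ofReal_zero, add_zero] at this
          exact this.mono_left nhdsWithin_le_nhds
        · filter_upwards [self_mem_nhdsWithin] with δ hδ
          have : 0 < δ := hδ
          simp [this.le]
    have t3 := t2.congr' (by
      filter_upwards [self_mem_nhdsWithin] with δ hδ
      exact (heq δ hδ).symm)
    rw [tendsto_nhds_unique t1 t3]
    congr 1; ext ξ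
    rw [mul_smul_comm]
    congr 2; ring
  simp_rw [key]
  have := Real.tendsto_integral_exp_smul_cocompact
    (fun ξ : ℝ => H (1 + 2 * Real.pi * ξ * Complex.I) * φ ξ)
  exact this.comp (tendsto_neg_atTop_atBot.mono_right atBot_le_cocompact)

lemma tauber_final (S : ℝ → ℝ) (hSm : Measurable S) (C : ℝ) (hS0 : ∀ u, 0 ≤ S u)
    (hSC : ∀ u, S u ≤ C) (hmono : ∀ u v, u ≤ v → S u * Real.exp u ≤ S v * Real.exp v)
    (c : ℝ) (K : ℝ → ℝ) (hK0 : ∀ u, 0 ≤ K u) (hKi : Integrable K) (hK1 : ∫ u, K u = 1)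
    (hlim : ∀ l : ℝ, 0 < l → Tendsto (fun y => ∫ v, S (y + v / l) * K v) atTop (𝓝 c)) :
    Tendsto S atTop (𝓝 c) := by
  have hC : 0 ≤ C := (hS0 0).trans (hSC 0)
  have hSKi : ∀ l y : ℝ, Integrable (fun v => S (y + v / l) * K v) := by
    intro l y
    refine hKi.bdd_mul (c := C) (hSm.comp (by fun_prop)).aestronglyMeasurable ?_
    filter_upwards with v
    rw [Real.norm_eq_abs, abs_of_nonneg (hS0 _)]
    exact hSC _
  have hcomp : ∀ u v, u ≤ v → S u ≤ S v * Real.exp (v - u) := by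
    intro u v huv
    have h1 := hmono u v huv
    rw [Real.exp_sub, mul_div_assoc', le_div_iff₀ (Real.exp_pos u)]
    exact h1
  set m : ℝ → ℝ := fun M => ∫ v in Set.Icc (-M) M, K v with hm
  have hm1 : Tendsto m atTop (𝓝 1) := by
    have h1 := intervalIntegral_tendsto_integral hKi tendsto_neg_atTop_atBot tendsto_id
    rw [hK1] at h1
    refine h1.congr' ?_
    filter_upwards [eventually_ge_atTop 0] with M hM
    simp only [id]
    rw [intervalIntegral.integral_of_le (by linarith)]
    exact integral_Icc_eq_integral_Ioc.symm
  have hsplit : ∀ M, m M + ∫ v in (Set.Icc (-M) M)ᶜ, K v = 1 := by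
    intro M
    rw [← hK1]
    exact integral_add_compl measurableSet_Icc hKi
  have hcomplnn : ∀ M, 0 ≤ ∫ v in (Set.Icc (-M) M)ᶜ, K v := fun M =>
    integral_nonneg (fun v => hK0 v)
  have hmnn : ∀ M, 0 ≤ m M := fun M => integral_nonneg (fun v => hK0 v)
  have hvl : ∀ h M v : ℝ, 0 < h → 0 < M → v ∈ Set.Icc (-M) M → -h ≤ v / (M / h) ∧ v / (M / h) ≤ h := by
    intro h M v hh hM hv
    have hl : 0 < M / h := by positivity
    rw [le_div_iff₀ hl, div_le_iff₀ hl]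
    have : h * (M / h) = M := by field_simp
    constructor
    · linarith [hv.1]
    · linarith [hv.2]
  have hupper : ∀ h M y : ℝ, 0 < h → 0 < M →
      S (y - h) * Real.exp (-(2 * h)) * m M ≤ ∫ v, S (y + v / (M / h)) * K v := by
    intro h M y hh hM
    calc S (y - h) * Real.exp (-(2 * h)) * m M
        = ∫ v in Set.Icc (-M) M, S (y - h) * Real.exp (-(2 * h)) * K v := by
          rw [integral_const_mul]
      _ ≤ ∫ v in Set.Icc (-M) M, S (y + v / (M / h)) * K v := by
          refine setIntegral_mono_on (hKi.const_mul _).integrableOn (hSKi _ _).integrableOn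
            measurableSet_Icc ?_
          intro v hv
          have hK := hK0 v
          obtain ⟨h1, h2⟩ := hvl h M v hh hM hv
          gcongr
          have h3 := hcomp (y - h) (y + v / (M / h)) (by linarith)
          calc S (y - h) * Real.exp (-(2 * h))
              ≤ S (y + v / (M / h)) * Real.exp (y + v / (M / h) - (y - h)) * Real.exp (-(2 * h)) := by
                gcongr
            _ = S (y + v / (M / h)) * Real.exp (v / (M / h) - h) := by
                rw [mul_assoc, ← Real.exp_add]; congr 2; ring
            _ ≤ S (y + v / (M / h)) * 1 := by
                have := hS0 (y + v / (M / h))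
                gcongr
                rw [Real.exp_le_one_iff]; linarith
            _ = _ := mul_one _
      _ ≤ ∫ v, S (y + v / (M / h)) * K v :=
          setIntegral_le_integral (hSKi _ _) (by
            filter_upwards with v
            exact mul_nonneg (hS0 _) (hK0 _))
  have hlower : ∀ h M y : ℝ, 0 < h → 0 < M →
      ∫ v, S (y + v / (M / h)) * K v ≤ S (y + h) * Real.exp (2 * h) + C * (1 - m M) := by
    intro h M y hh hM
    rw [← integral_add_compl (measurableSet_Icc (a := -M) (b := M)) (hSKi (M / h) y)]
    gcongr ?_ + ?_
    · calc ∫ v in Set.Icc (-M) M, S (y + v / (M / h)) * K v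
          ≤ ∫ v in Set.Icc (-M) M, S (y + h) * Real.exp (2 * h) * K v := by
            refine setIntegral_mono_on (hSKi _ _).integrableOn (hKi.const_mul _).integrableOn
              measurableSet_Icc ?_
            intro v hv
            have hK := hK0 v
            obtain ⟨h1, h2⟩ := hvl h M v hh hM hv
            gcongr
            have h3 := hcomp (y + v / (M / h)) (y + h) (by linarith)
            refine h3.trans ?_
            have := hS0 (y + h)
            gcongr
            linarith
        _ = S (y + h) * Real.exp (2 * h) * m M := by rw [integral_const_mul]
        _ ≤ S (y + h) * Real.exp (2 * h) * 1 := by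
            have := hS0 (y + h)
            gcongr
            linarith [hsplit M, hcomplnn M]
        _ = _ := mul_one _
    · calc ∫ v in (Set.Icc (-M) M)ᶜ, S (y + v / (M / h)) * K v
          ≤ ∫ v in (Set.Icc (-M) M)ᶜ, C * K v := by
            refine setIntegral_mono_on (hSKi _ _).integrableOn (hKi.const_mul _).integrableOn
              measurableSet_Icc.compl ?_
            intro v hv
            have hK := hK0 v
            gcongr
            exact hSC _
        _ = C * (1 - m M) := by
            rw [integral_const_mul]; congr 1; linarith [hsplit M]
  rw [tendsto_order]
  constructor
  · intro a ha
    have hM : ∀ᶠ M in atTop, a < c - C * (1 - m M) := by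
      have : Tendsto (fun M => c - C * (1 - m M)) atTop (𝓝 (c - C * (1 - 1))) :=
        tendsto_const_nhds.sub ((tendsto_const_nhds.sub hm1).const_mul C)
      exact this.eventually_const_lt (by simpa using ha)
    obtain ⟨M, hM1, hM0⟩ := (hM.and (eventually_gt_atTop 0)).exists
    have hh : ∀ᶠ h in 𝓝[>] (0:ℝ), a < (c - C * (1 - m M)) * Real.exp (-(2 * h)) := by
      have : Tendsto (fun h : ℝ => (c - C * (1 - m M)) * Real.exp (-(2 * h))) (𝓝 0)
          (𝓝 ((c - C * (1 - m M)) * Real.exp (-(2 * 0)))) :=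
        Continuous.tendsto (by fun_prop : Continuous (fun h : ℝ => (c - C * (1 - m M)) * Real.exp (-(2 * h)))) 0
      exact (this.mono_left nhdsWithin_le_nhds).eventually_const_lt (by simpa using hM1)
    obtain ⟨h, hh1, hh0⟩ := (hh.and self_mem_nhdsWithin).exists
    have hh0 : 0 < h := hh0
    have := (((hlim (M / h) (by positivity)).sub_const (C * (1 - m M))).mul_const
      (Real.exp (-(2 * h)))).eventually_const_lt hh1
    have h2 := (tendsto_atTop_add_const_right atTop (-h) tendsto_id).eventually this
    filter_upwards [h2] with z hz
    refine hz.trans_le ?_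
    have h4 := hlower h M (z + -h) hh0 hM0
    rw [neg_add_cancel_right] at h4
    rw [Real.exp_neg, ← div_eq_mul_inv, div_le_iff₀ (Real.exp_pos _)]
    simp only [id]
    linarith
  · intro a ha
    have hM : ∀ᶠ M in atTop, c / m M < a := by
      have : Tendsto (fun M => c / m M) atTop (𝓝 (c / 1)) :=
        tendsto_const_nhds.div hm1 one_ne_zero
      exact this.eventually_lt_const (by simpa using ha)
    obtain ⟨M, ⟨hM1, hM0⟩, hmp⟩ := ((hM.and (eventually_gt_atTop 0)).and
      (hm1.eventually_const_lt zero_lt_one)).exists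
    have hh : ∀ᶠ h in 𝓝[>] (0:ℝ), c / m M * Real.exp (2 * h) < a := by
      have : Tendsto (fun h : ℝ => c / m M * Real.exp (2 * h)) (𝓝 0)
          (𝓝 (c / m M * Real.exp (2 * 0))) :=
        Continuous.tendsto (by fun_prop : Continuous (fun h : ℝ => c / m M * Real.exp (2 * h))) 0
      exact (this.mono_left nhdsWithin_le_nhds).eventually_lt_const (by simpa using hM1)
    obtain ⟨h, hh1, hh0⟩ := (hh.and self_mem_nhdsWithin).exists
    have hh0 : 0 < h := hh0
    have := (((hlim (M / h) (by positivity)).div_const (m M)).mul_const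
      (Real.exp (2 * h))).eventually_lt_const hh1
    have h2 := (tendsto_atTop_add_const_right atTop h tendsto_id).eventually this
    filter_upwards [h2] with z hz
    refine lt_of_le_of_lt ?_ hz
    have h4 := hupper h M (z + h) hh0 hM0
    rw [add_sub_cancel_right] at h4
    simp only [id]
    rw [div_mul_eq_mul_div, le_div_iff₀ hmp]
    rw [Real.exp_neg] at h4
    have hE := Real.exp_pos (2 * h)
    calc S z * m M = (S z * (Real.exp (2 * h))⁻¹ * m M) * Real.exp (2 * h) := by field_simp
      _ ≤ _ := by gcongr

theorem wiener_ikehara_bdd (S : ℝ → ℝ) (hSm : Measurable S) (C : ℝ) (hS0 : ∀ u, 0 ≤ S u)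
    (hSC : ∀ u, S u ≤ C) (hSneg : ∀ u < 0, S u = 0)
    (hmono : ∀ u v, u ≤ v → S u * Real.exp u ≤ S v * Real.exp v)
    (c : ℝ) (H : ℂ → ℂ) (hHc : ContinuousOn H {s | 1 ≤ s.re})
    (hH : ∀ δ : ℝ, 0 < δ → ∀ ξ : ℝ, 𝓕 (fun u : ℝ =>
      (((S u - if 0 ≤ u then c else 0) * Real.exp (-δ * u) : ℝ) : ℂ)) ξ =
      H (1 + δ + 2 * Real.pi * ξ * Complex.I)) :
    Tendsto S atTop (𝓝 c) := by
  obtain ⟨φ, K, hφc, hφs, hKf, hK0, hKi, hK1⟩ := exists_kernel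
  refine tauber_final S hSm C hS0 hSC hmono c K hK0 hKi hK1 ?_
  intro l hl
  set B : ℝ → ℝ := fun u => S u - if 0 ≤ u then c else 0 with hBdef
  have hBm : Measurable B := by
    refine hSm.sub (Measurable.ite measurableSet_Ici measurable_const measurable_const)
  have hB : ∀ u, |B u| ≤ C + |c| := by
    intro u
    have h1 : |S u| ≤ C := by rw [abs_of_nonneg (hS0 u)]; exact hSC u
    have h2 : |if 0 ≤ u then c else 0| ≤ |c| := by split_ifs <;> simp
    exact (abs_sub _ _).trans (add_le_add h1 h2)
  have hF : 𝓕 (fun x => φ (x / l)) = fun u => ((l * K (l * u) : ℝ) : ℂ) := by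
    ext u
    rw [fourier_scale φ l hl, hKf]; push_cast; rfl
  have hφli : Integrable (𝓕 (fun x => φ (x / l))) := by
    rw [hF]
    have h1 : Integrable (fun u => l * K (l * u)) := ((integrable_comp_mul_left_iff K hl.ne').2 hKi).const_mul l
    exact h1.ofReal
  have t := tauber_limit B hBm (C + |c|) hB (fun u hu => by simp [hBdef, hSneg u hu, not_le.2 hu]) H hHc hH
    (fun x => φ (x / l)) (by fun_prop) (by
      have := hφs.comp_homeomorph (Homeomorph.mulRight₀ l⁻¹ (inv_ne_zero hl.ne'))
      simpa [Function.comp_def, div_eq_mul_inv] using this) hφli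
  have e : ∀ y : ℝ, ∫ u, (B u : ℂ) * 𝓕 (fun x => φ (x / l)) (u - y) =
      ((∫ v, B (y + v / l) * K v : ℝ) : ℂ) := by
    intro y
    rw [hF]
    simp_rw [← Complex.ofReal_mul]
    rw [integral_complex_ofReal]
    congr 1
    have h1 := Measure.integral_comp_mul_left (fun v => B (y + v / l) * K v) l
    have h2 := integral_sub_right_eq_self (μ := volume) (fun w => B (y + w) * (l * K (l * w))) y
    simp only [add_sub_cancel] at h2
    rw [h2]
    rw [abs_of_pos (inv_pos.2 hl), smul_eq_mul] at h1
    have h3 : ∫ v, B (y + v / l) * K v = l * ∫ w, B (y + l * w / l) * K (l * w) := by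
      rw [h1, ← mul_assoc, mul_inv_cancel₀ hl.ne', one_mul]
    rw [h3, ← integral_const_mul]
    congr 1; ext w
    rw [mul_div_cancel_left₀ _ hl.ne']
    ring
  simp_rw [e] at t
  have t' : Tendsto (fun y => ∫ v, B (y + v / l) * K v) atTop (𝓝 0) := by
    have := (Complex.continuous_re.tendsto _).comp t
    simpa [Function.comp_def] using this
  have t2 : Tendsto (fun y : ℝ => ∫ v, (if 0 ≤ y + v / l then c else 0) * K v) atTop (𝓝 (∫ v, c * K v)) := by
    refine tendsto_integral_filter_of_dominated_convergence (fun v => |c| * K v) ?_ ?_ ?_ ?_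
    · filter_upwards with y
      refine AEStronglyMeasurable.mul ?_ hKi.aestronglyMeasurable
      exact (Measurable.ite (measurableSet_le measurable_const (by fun_prop)) measurable_const measurable_const).aestronglyMeasurable
    · filter_upwards with y
      filter_upwards with v
      have := hK0 v
      rw [norm_mul, Real.norm_eq_abs, Real.norm_eq_abs, abs_of_nonneg (hK0 v)]
      refine mul_le_mul_of_nonneg_right ?_ this
      by_cases h : 0 ≤ y + v / l
      · rw [if_pos h]
      · rw [if_neg h, abs_zero]; exact abs_nonneg c
    · exact hKi.const_mul _
    · filter_upwards with v
      refine tendsto_const_nhds.congr' ?_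
      filter_upwards [eventually_ge_atTop (-(v / l))] with y hy
      rw [if_pos (by linarith)]
  have t3 := t'.add t2
  rw [integral_const_mul, hK1, zero_add, mul_one] at t3
  refine t3.congr ?_
  intro y
  rw [← integral_add]
  · congr 1; ext v
    change (S (y + v / l) - if 0 ≤ y + v / l then c else 0) * K v +
      (if 0 ≤ y + v / l then c else 0) * K v = S (y + v / l) * K v
    ring
  · refine hKi.bdd_mul (c := C + |c|) (hBm.comp (by fun_prop)).aestronglyMeasurable ?_
    filter_upwards with v using hB _
  · refine hKi.bdd_mul (c := |c|) (Measurable.ite (measurableSet_le measurable_const (by fun_prop)) measurable_const measurable_const).aestronglyMeasurable ?_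
    filter_upwards with v
    by_cases h : 0 ≤ y + v / l
    · rw [if_pos h, Real.norm_eq_abs]
    · rw [if_neg h, norm_zero]; exact abs_nonneg c

open ArithmeticFunction.vonMangoldt in
theorem psi_ap (q : ℕ) [NeZero q] (a : ZMod q) (ha : IsUnit a) :
    Tendsto (fun x : ℝ => (∑ n ∈ Finset.Icc 1 ⌊x⌋₊, residueClass a n) / x) atTop
      (𝓝 ((q.totient : ℝ)⁻¹)) := by
  set P : ℝ → ℝ := fun x => ∑ n ∈ Finset.Icc 1 ⌊x⌋₊, residueClass a n with hP
  set c : ℝ := (q.totient : ℝ)⁻¹ with hc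
  have hPmono : Monotone P := by
    intro x y hxy
    refine Finset.sum_le_sum_of_subset_of_nonneg ?_ fun n _ _ => residueClass_nonneg a n
    exact Finset.Icc_subset_Icc_right (Nat.floor_mono hxy)
  have hP0 : ∀ x, 0 ≤ P x := fun x => Finset.sum_nonneg fun n _ => residueClass_nonneg a n
  have hPC : ∀ x, 0 ≤ x → P x ≤ (Real.log 4 + 4) * x := by
    intro x hx
    refine le_trans ?_ (Chebyshev.psi_le_const_mul_self hx)
    exact Finset.sum_le_sum fun n _ => residueClass_le a n
  have hC0 : (0:ℝ) ≤ Real.log 4 + 4 := by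
    have := Real.log_nonneg (by norm_num : (1:ℝ) ≤ 4)
    linarith
  have hPneg : ∀ x < 1, P x = 0 := by
    intro x hx
    simp [hP, Nat.floor_eq_zero.2 hx]
  set S : ℝ → ℝ := fun u => P (Real.exp u) * Real.exp (-u) with hS
  have hSm : Measurable S := (hPmono.measurable.comp Real.measurable_exp).mul (by fun_prop)
  have hS0 : ∀ u, 0 ≤ S u := fun u => mul_nonneg (hP0 _) (Real.exp_pos _).le
  have hSC : ∀ u, S u ≤ Real.log 4 + 4 := by
    intro u
    have := hPC (Real.exp u) (Real.exp_pos u).le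
    simp only [hS]
    rw [Real.exp_neg, ← div_eq_mul_inv, div_le_iff₀ (Real.exp_pos u)]
    exact this
  have hSneg : ∀ u < 0, S u = 0 := by
    intro u hu
    simp only [hS]
    rw [hPneg _ (Real.exp_lt_one_iff.2 hu), zero_mul]
  have hSe : ∀ u, S u * Real.exp u = P (Real.exp u) := by
    intro u
    simp only [hS]
    rw [mul_assoc, ← Real.exp_add, neg_add_cancel, Real.exp_zero, mul_one]
  have main : Tendsto S atTop (𝓝 c) := by
    refine wiener_ikehara_bdd S hSm (Real.log 4 + 4) hS0 hSC hSneg ?_ c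
      (fun s => (LFunctionResidueClassAux a s - c) / s) ?_ ?_
    · intro u v huv
      rw [hSe, hSe]
      exact hPmono (Real.exp_le_exp.2 huv)
    · refine ContinuousOn.div ((continuousOn_LFunctionResidueClassAux a).sub continuousOn_const)
        continuousOn_id ?_
      intro s hs h
      have hs : 1 ≤ s.re := hs
      have h : s = 0 := h
      rw [h] at hs
      norm_num at hs
    · intro δ hδ ξ
      set s : ℂ := 1 + δ + 2 * Real.pi * ξ * Complex.I with hs
      have hsre : s.re = 1 + δ := by simp [hs]
      have hs1 : 1 < s.re := by rw [hsre]; linarith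
      have hsne : s ≠ 0 := by
        intro h; rw [h] at hs1; norm_num at hs1
      have hsne1 : s - 1 ≠ 0 := by
        intro h
        rw [sub_eq_zero.1 h] at hs1; norm_num at hs1
      have hL : LSeries (fun n => (residueClass a n : ℂ)) s =
          s * ∫ t in Set.Ioi (1 : ℝ), (∑ k ∈ Finset.Icc 1 ⌊t⌋₊, (residueClass a k : ℂ)) * t ^ (-(s + 1)) := by
        refine LSeries_eq_mul_integral_of_nonneg (residueClass a) zero_le_one hs1 ?_
          (residueClass_nonneg a)
        refine Asymptotics.IsBigO.of_bound (Real.log 4 + 4) ?_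
        filter_upwards with n
        have h1 := hPC n (Nat.cast_nonneg n)
        have h2 := hP0 n
        simp only [hP, Nat.floor_natCast] at h1 h2
        rw [Real.norm_eq_abs, abs_of_nonneg h2, Real.rpow_one, Real.norm_natCast]
        exact h1
      have hsub : ∫ t in Set.Ioi (1 : ℝ), (∑ k ∈ Finset.Icc 1 ⌊t⌋₊, (residueClass a k : ℂ)) * t ^ (-(s + 1))
          = ∫ u in Set.Ioi (0:ℝ), (S u : ℂ) * Complex.exp (-(s - 1) * u) := by
        have himg : Real.exp '' (Set.Ioi 0) = Set.Ioi 1 := by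
          ext t
          constructor
          · rintro ⟨u, hu, rfl⟩
            exact Real.one_lt_exp_iff.2 hu
          · intro ht
            have ht : 1 < t := ht
            exact ⟨Real.log t, Real.log_pos ht, Real.exp_log (by linarith)⟩
        rw [← himg, integral_image_eq_integral_abs_deriv_smul measurableSet_Ioi
          (fun x _ => (Real.hasDerivAt_exp x).hasDerivWithinAt) Real.exp_injective.injOn]
        refine setIntegral_congr_fun measurableSet_Ioi ?_
        intro u _
        have e1 : ((Real.exp u : ℝ) : ℂ) ^ (-(s + 1)) = Complex.exp (u * (-(s + 1))) := by
          rw [Complex.cpow_def_of_ne_zero (by exact_mod_cast (Real.exp_pos u).ne'),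
            ← Complex.ofReal_log (Real.exp_pos u).le, Real.log_exp]
        simp only [hS, hP, Real.abs_exp]
        rw [e1, Complex.real_smul]
        push_cast
        have e2 : Complex.exp (u * (-(s + 1))) * Complex.exp u =
            Complex.exp (-u) * Complex.exp (-(s - 1) * u) := by
          rw [← Complex.exp_add, ← Complex.exp_add]; congr 1; ring
        rw [mul_comm (Complex.exp u), mul_assoc, e2, mul_assoc]
      have hre : (-(s - 1)).re < 0 := by simp [hsre, hδ]
      have hint : IntegrableOn (fun u : ℝ => Complex.exp (-(s - 1) * u)) (Set.Ioi 0) :=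
        integrableOn_exp_mul_complex_Ioi hre 0
      have hexp : ∫ u in Set.Ioi (0:ℝ), Complex.exp (-(s - 1) * u) = 1 / (s - 1) := by
        rw [integral_exp_mul_complex_Ioi hre]
        simp only [Complex.ofReal_zero, mul_zero, Complex.exp_zero]
        field_simp
      have hSint : IntegrableOn (fun u : ℝ => (S u : ℂ) * Complex.exp (-(s - 1) * u)) (Set.Ioi 0) := by
        refine hint.bdd_mul (c := Real.log 4 + 4) (by
          exact (Complex.measurable_ofReal.comp hSm).aestronglyMeasurable) ?_
        filter_upwards with u
        rw [Complex.norm_real, Real.norm_eq_abs, abs_of_nonneg (hS0 u)]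
        exact hSC u
      have hF : 𝓕 (fun u : ℝ => (((S u - if 0 ≤ u then c else 0) * Real.exp (-δ * u) : ℝ) : ℂ)) ξ =
          ∫ u in Set.Ioi (0:ℝ), ((S u : ℂ) * Complex.exp (-(s - 1) * u) - c * Complex.exp (-(s - 1) * u)) := by
        rw [Real.fourier_real_eq_integral_exp_smul, ← integral_Ici_eq_integral_Ioi,
          ← integral_indicator measurableSet_Ici]
        congr 1; ext u
        rcases lt_or_ge u 0 with hu | hu
        · rw [Set.indicator_of_notMem (by simpa using hu), hSneg u hu, if_neg (not_le.2 hu)]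
          simp
        · rw [Set.indicator_of_mem (by simpa using hu), if_pos hu]
          have : Complex.exp (-(s - 1) * u) =
              Complex.exp (((-2 * Real.pi * u * ξ : ℝ) : ℂ) * Complex.I) * Complex.exp (-δ * u) := by
            rw [← Complex.exp_add]; congr 1; rw [hs]; push_cast; ring
          rw [this, smul_eq_mul]
          push_cast
          ring
      rw [hF, integral_sub hSint (hint.const_mul _), integral_const_mul, hexp, ← hsub]
      have hA := eqOn_LFunctionResidueClassAux ha hs1
      simp only at hA
      rw [hA, hL]
      have hcc : (c : ℂ) = (q.totient : ℂ)⁻¹ := by simp [hc]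
      rw [hcc]
      field_simp
      ring
  have := main.comp Real.tendsto_log_atTop
  refine this.congr' ?_
  filter_upwards [eventually_gt_atTop 0] with x hx
  simp only [Function.comp, hS]
  rw [Real.exp_neg, Real.exp_log hx, div_eq_mul_inv]

lemma tendsto_log_div_id : Tendsto (fun x : ℝ => Real.log x / x) atTop (𝓝 0) :=
  (Real.isLittleO_log_id_atTop).tendsto_div_nhds_zero

lemma tendsto_bigO_aux (f : ℝ → ℝ) (hf : f =O[atTop] fun x => x / Real.log x ^ 2) :
    Tendsto (fun x : ℝ => f x * (Real.log x / x)) atTop (𝓝 0) := by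
  have h1 : (fun x : ℝ => f x * (Real.log x / x)) =O[atTop]
      fun x => (x / Real.log x ^ 2) * (Real.log x / x) :=
    hf.mul (Asymptotics.isBigO_refl _ _)
  refine h1.trans_tendsto ?_
  refine (Real.tendsto_log_atTop.inv_tendsto_atTop).congr' ?_
  filter_upwards [eventually_gt_atTop 1] with x hx
  have := Real.log_pos hx
  have hx0 : (0:ℝ) < x := by linarith
  simp only [Pi.inv_apply]
  field_simp

lemma li_asymp : Tendsto (fun x : ℝ => (∫ t in (2:ℝ)..x, 1 / Real.log t) * (Real.log x / x))
    atTop (𝓝 1) := by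
  have h1 := tendsto_bigO_aux _ Chebyshev.integral_one_div_log_sq_isBigO
  have h2 := (tendsto_log_div_id.const_mul (2 / Real.log 2))
  have h3 : Tendsto (fun _ : ℝ => (1:ℝ)) atTop (𝓝 1) := tendsto_const_nhds
  have h4 := (h3.sub h2).add h1
  rw [mul_zero, sub_zero, add_zero] at h4
  refine h4.congr' ?_
  filter_upwards [eventually_ge_atTop 2] with x hx
  have hlog : ∀ t ∈ Set.uIcc 2 x, 0 < Real.log t := by
    intro t ht
    rw [Set.uIcc_of_le hx] at ht
    exact Real.log_pos (by linarith [ht.1])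
  have hi1 : IntervalIntegrable (fun t => 1 / Real.log t) volume 2 x := by
    refine ContinuousOn.intervalIntegrable fun t ht => ContinuousAt.continuousWithinAt ?_
    have := hlog t ht
    have ht0 : t ≠ 0 := by rintro rfl; simp at this
    exact continuousAt_const.div (Real.continuousAt_log ht0) this.ne'
  have hi2 := Chebyshev.intervalIntegrable_one_div_log_sq (a := 2) (b := x) (by norm_num) (by linarith)
  have hd : ∀ t ∈ Set.uIcc 2 x, HasDerivAt (fun t => t / Real.log t)
      (1 / Real.log t - 1 / Real.log t ^ 2) t := by
    intro t ht
    have := hlog t ht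
    have ht0 : t ≠ 0 := by rintro rfl; simp at this
    have he : 1 / Real.log t - 1 / Real.log t ^ 2 = (1 * Real.log t - id t * t⁻¹) / Real.log t ^ 2 := by
      simp only [id]
      field_simp
    rw [he]
    exact (hasDerivAt_id t).div (Real.hasDerivAt_log ht0) this.ne'
  have hftc := intervalIntegral.integral_eq_sub_of_hasDerivAt hd (hi1.sub hi2)
  rw [intervalIntegral.integral_sub hi1 hi2] at hftc
  have hli : ∫ t in (2:ℝ)..x, 1 / Real.log t = x / Real.log x - 2 / Real.log 2 +
      ∫ t in (2:ℝ)..x, 1 / Real.log t ^ 2 := by linarith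
  rw [hli]
  have hl := Real.log_pos (show 1 < x by linarith)
  have hx0 : 0 < x := by linarith
  have : x / Real.log x * (Real.log x / x) = 1 := by field_simp
  linear_combination -this

theorem pi_ap (a b : ℕ) (ha : 0 < a) (hab : Nat.Coprime a b) :
    Tendsto (fun x : ℝ =>
        (((Finset.range (⌊x⌋₊ + 1)).filter fun p => p.Prime ∧ p % a = b % a).card : ℝ) *
          (Real.log x / x)) atTop (𝓝 ((a.totient : ℝ)⁻¹)) := by
  have : NeZero a := ⟨ha.ne'⟩
  have hpsi := psi_ap a (b : ZMod a) ((ZMod.isUnit_iff_coprime b a).2 hab.symm)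
  set P : ℝ → ℝ := fun x => ∑ n ∈ Finset.Icc 1 ⌊x⌋₊,
    ArithmeticFunction.vonMangoldt.residueClass (b : ZMod a) n with hP
  set T : ℝ → ℝ := fun x => ∑ n ∈ Finset.Ioc 0 ⌊x⌋₊ with (n.Prime ∧ n % a = b % a), Real.log n with hT
  set N : ℝ → ℝ := fun x => (((Finset.range (⌊x⌋₊ + 1)).filter
    fun p => p.Prime ∧ p % a = b % a).card : ℝ) with hN
  have hIoc : ∀ n, Finset.Icc 1 n = Finset.Ioc 0 n := fun n => by ext; simp [Nat.succ_le_iff]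
  have hPe : ∀ x, P x = ∑ n ∈ Finset.Ioc 0 ⌊x⌋₊,
      if n % a = b % a then ArithmeticFunction.vonMangoldt n else 0 := by
    intro x
    simp only [hP, hIoc]
    refine Finset.sum_congr rfl fun n _ => ?_
    simp only [ArithmeticFunction.vonMangoldt.residueClass, Set.indicator_apply]
    have : n ∈ {n : ℕ | (n : ZMod a) = (b : ZMod a)} ↔ n % a = b % a := ZMod.natCast_eq_natCast_iff n b a
    simp only [this]
  have hNe : ∀ x, N x = ∑ n ∈ Finset.Ioc 0 ⌊x⌋₊ with (n.Prime ∧ n % a = b % a), (1:ℝ) := by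
    intro x
    rw [Finset.sum_const, nsmul_eq_mul, mul_one]
    simp only [hN]
    congr 2
    ext n
    simp only [Finset.mem_filter, Finset.mem_range, Finset.mem_Ioc]
    constructor
    · rintro ⟨h1, h2⟩; exact ⟨⟨h2.1.pos, by omega⟩, h2⟩
    · rintro ⟨h1, h2⟩; exact ⟨by omega, h2⟩
  have hTP : ∀ x, T x ≤ P x := by
    intro x
    rw [hPe]
    simp only [hT]
    rw [Finset.sum_filter]
    refine Finset.sum_le_sum fun n _ => ?_
    by_cases hn : n.Prime <;> by_cases hm : n % a = b % a <;>
      simp [hn, hm, ArithmeticFunction.vonMangoldt_apply_prime]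
  have hPT : ∀ x, P x - T x ≤ Chebyshev.psi x - Chebyshev.theta x := by
    intro x
    rw [hPe, Chebyshev.psi, Chebyshev.theta]
    simp only [hT]
    rw [Finset.sum_filter, Finset.sum_filter, ← Finset.sum_sub_distrib, ← Finset.sum_sub_distrib]
    refine Finset.sum_le_sum fun n _ => ?_
    by_cases hn : n.Prime <;> by_cases hm : n % a = b % a <;>
      simp [hn, hm, ArithmeticFunction.vonMangoldt_apply_prime]
  have hTx : Tendsto (fun x => T x / x) atTop (𝓝 ((a.totient : ℝ)⁻¹)) := by
    obtain ⟨C, hC⟩ := Chebyshev.psi_sub_theta_le_mul_sqrt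
    have h1 : Tendsto (fun x : ℝ => C * (√x)⁻¹) atTop (𝓝 (C * 0)) :=
      (Real.tendsto_sqrt_atTop.inv_tendsto_atTop).const_mul C
    have h2 := hpsi.sub h1
    rw [mul_zero, sub_zero] at h2
    refine tendsto_of_tendsto_of_tendsto_of_le_of_le' h2 hpsi ?_ ?_
    · filter_upwards [eventually_gt_atTop 0] with x hx
      have h3 := (hPT x).trans (hC x)
      have h4 : C * (√x)⁻¹ = C * √x / x := by
        have := Real.sq_sqrt hx.le
        have h5 : 0 < √x := Real.sqrt_pos.2 hx
        field_simp
        rw [this]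
      rw [h4, ← sub_div]
      gcongr
      linarith
    · filter_upwards [eventually_gt_atTop 0] with x hx
      gcongr
      exact hTP x
  have hNT : ∀ x, 2 ≤ x → 0 ≤ N x - T x / Real.log x ∧ N x - T x / Real.log x ≤
      (Nat.primeCounting ⌊x⌋₊ : ℝ) - Chebyshev.theta x / Real.log x := by
    intro x hx
    have hl := Real.log_pos (show 1 < x by linarith)
    have hpi : (Nat.primeCounting ⌊x⌋₊ : ℝ) = ∑ n ∈ Finset.Ioc 0 ⌊x⌋₊ with n.Prime, (1:ℝ) := by
      rw [Finset.sum_const, nsmul_eq_mul, mul_one, Nat.primeCounting, Nat.primeCounting',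
        Nat.count_eq_card_filter_range]
      congr 2
      ext n
      simp only [Finset.mem_filter, Finset.mem_range, Finset.mem_Ioc]
      constructor
      · rintro ⟨h1, h2⟩; exact ⟨⟨h2.pos, by omega⟩, h2⟩
      · rintro ⟨h1, h2⟩; exact ⟨by omega, h2⟩
    have hnn : ∀ n ∈ Finset.Ioc 0 ⌊x⌋₊, 0 ≤ 1 - Real.log n / Real.log x := by
      intro n hn
      rw [Finset.mem_Ioc] at hn
      have h1 : (n:ℝ) ≤ x := (Nat.le_floor_iff (by linarith)).1 hn.2
      have h2 : Real.log n ≤ Real.log x := Real.log_le_log (by exact_mod_cast hn.1) h1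
      rw [sub_nonneg, div_le_one hl]
      exact h2
    have e1 : N x - T x / Real.log x = ∑ n ∈ Finset.Ioc 0 ⌊x⌋₊ with (n.Prime ∧ n % a = b % a),
        (1 - Real.log n / Real.log x) := by
      rw [hNe, Finset.sum_sub_distrib, ← Finset.sum_div]
    rw [e1, hpi, Chebyshev.theta, Finset.sum_div, ← Finset.sum_sub_distrib]
    constructor
    · exact Finset.sum_nonneg fun n hn => hnn n (Finset.mem_filter.1 hn).1
    · refine Finset.sum_le_sum_of_subset_of_nonneg ?_ fun n hn _ => hnn n (Finset.mem_filter.1 hn).1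
      intro n hn
      rw [Finset.mem_filter] at hn ⊢
      exact ⟨hn.1, hn.2.1⟩
  have hd := tendsto_bigO_aux _ Chebyshev.primeCounting_sub_theta_div_log_isBigO
  have hup := hTx.add hd
  rw [add_zero] at hup
  refine tendsto_of_tendsto_of_tendsto_of_le_of_le' hTx hup ?_ ?_
  · filter_upwards [eventually_ge_atTop 2] with x hx
    have hl := Real.log_pos (show 1 < x by linarith)
    have hx0 : 0 < x := by linarith
    have h1 := (hNT x hx).1
    have h2 : T x / x = T x / Real.log x * (Real.log x / x) := by field_simp
    change T x / x ≤ N x * (Real.log x / x)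
    rw [h2]
    gcongr
    linarith
  · filter_upwards [eventually_ge_atTop 2] with x hx
    have hl := Real.log_pos (show 1 < x by linarith)
    have hx0 : 0 < x := by linarith
    have h1 := (hNT x hx).2
    have h2 : T x / x = T x / Real.log x * (Real.log x / x) := by field_simp
    change N x * (Real.log x / x) ≤ _
    rw [h2, ← add_mul]
    gcongr
    linarith

/-- Prime number theorem for arithmetic progressions:  if `gcd a b = 1`, then the number
of primes `p ≤ x` with `p ≡ b (mod a)` is asymptotic to `Li(x)/φ(a)`. -/
theorem pnt_arithmetic_progressions (a b : ℕ) (ha : 0 < a) (hab : Nat.Coprime a b) :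
    Tendsto (fun x : ℝ =>
        (((Finset.range (⌊x⌋₊ + 1)).filter fun p => p.Prime ∧ p % a = b % a).card : ℝ) /
          ((1 / (Nat.totient a : ℝ)) * ∫ t in (2:ℝ)..x, 1 / Real.log t))
      atTop (nhds 1) := by
  have hc : (0:ℝ) < (a.totient : ℝ)⁻¹ := by
    have := Nat.totient_pos.2 ha
    positivity
  have h := (pi_ap a b ha hab).div (li_asymp.const_mul ((a.totient : ℝ)⁻¹)) (by simpa using ha.ne')
  rw [mul_one, div_self hc.ne'] at h
  refine h.congr' ?_
  filter_upwards [eventually_ge_atTop 2] with x hx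
  have hl := Real.log_pos (show 1 < x by linarith)
  have hx0 : 0 < x := by linarith
  simp only [Pi.div_apply]
  rw [← mul_assoc, mul_div_mul_right _ _ (by positivity), one_div]
end

section
/- Let g ∈ ℤ[x] be a monic irreducible polynomial, and for each prime p let ω(p) denote the number of solutions in ℤ/pℤ of the congruence g(x) ≡ 0 (mod p). Then the sum ∑_p (ω(p) − 1)/p, taken over all primes p, converges; that is, the partial sums ∑_{p ≤ N} (ω(p) − 1)/p tend to a finite limit as N → ∞. -/
open Filter

open ArithmeticFunction in
lemma aux_vm : Tendsto (fun σ : ℝ => σ * ∑' n : ℕ, vonMangoldt n / (n : ℝ) ^ (1 + σ)) (nhdsWithin 0 (Set.Ioi 0))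
    (nhds 1) := by
  let a : ZMod 1 := 1
  have ha : IsUnit a := isUnit_one
  have hres : ∀ n, vonMangoldt.residueClass a n = vonMangoldt n := by
    intro n
    simp only [vonMangoldt.residueClass, Set.indicator]
    refine if_pos ?_
    simp only [Set.mem_ofPred_eq]
    exact Subsingleton.elim _ _
  have H {x : ℝ} (hx : 1 < x) :
      ∑' n, vonMangoldt n / (n : ℝ) ^ x =
        (vonMangoldt.LFunctionResidueClassAux a x).re + 1 / (x - 1) := by
    have := vonMangoldt.LFunctionResidueClassAux_real ha hx
    refine Complex.ofReal_injective ?_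
    simp only [Complex.ofReal_tsum, Complex.ofReal_div, Complex.ofReal_cpow (Nat.cast_nonneg _), Complex.ofReal_natCast,
      Complex.ofReal_add, Complex.ofReal_sub, Complex.ofReal_one]
    simp_rw [← vonMangoldt.LFunctionResidueClassAux_real ha hx,
      vonMangoldt.eqOn_LFunctionResidueClassAux ha <| Set.mem_ofPred.mpr (Complex.ofReal_re x ▸ hx)]
    simp only [Nat.totient_one, Nat.cast_one, inv_one, sub_add_cancel,
      LSeries, LSeries.term]
    refine tsum_congr fun n ↦ ?_
    split_ifs with hn
    · simp [hn]
    · simp [hres]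
  have hc : ContinuousWithinAt (fun x : ℝ ↦ (vonMangoldt.LFunctionResidueClassAux a x).re) (Set.Ici 1) 1 := by
    have : ContinuousOn (fun x : ℝ ↦ (vonMangoldt.LFunctionResidueClassAux a x).re) (Set.Ici 1) :=
      Complex.continuous_re.continuousOn.comp (t := Set.univ) (vonMangoldt.continuousOn_LFunctionResidueClassAux a)
      (fun ⦃x⦄ a ↦ trivial) |>.comp Complex.continuous_ofReal.continuousOn fun x hx ↦ by
        simpa only [Set.mem_ofPred_eq, Complex.ofReal_re] using Set.mem_Ici.1 hx
    exact this 1 (Set.mem_Ici.2 le_rfl)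
  have hshift : Tendsto (fun σ : ℝ => 1 + σ) (nhdsWithin 0 (Set.Ioi 0)) (nhdsWithin 1 (Set.Ici 1)) := by
    apply tendsto_nhdsWithin_iff.2
    constructor
    · apply Tendsto.mono_left _ nhdsWithin_le_nhds
      have : Continuous (fun σ : ℝ => 1 + σ) := by fun_prop
      simpa using this.tendsto 0
    · filter_upwards [self_mem_nhdsWithin] with σ hσ
      simp only [Set.mem_Ioi] at hσ
      simp [hσ.le]
  have h1 := hc.tendsto.comp hshift
  have h2 : Tendsto (fun σ : ℝ => σ) (nhdsWithin 0 (Set.Ioi 0)) (nhds 0) := tendsto_id.mono_left nhdsWithin_le_nhds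
  have h3 := (h2.mul h1).add_const 1
  rw [zero_mul, zero_add] at h3
  refine h3.congr' ?_
  filter_upwards [self_mem_nhdsWithin] with σ hσ
  simp only [Set.mem_Ioi] at hσ
  rw [H (by linarith)]
  simp only [Function.comp]
  rw [add_sub_cancel_left]
  generalize (vonMangoldt.LFunctionResidueClassAux a _).re = y
  field_simp

open ArithmeticFunction in
lemma aux_vm_summable (σ : ℝ) (hσ : 0 < σ) : Summable (fun n : ℕ => vonMangoldt n / (n : ℝ) ^ (1 + σ)) := by
  have h := LSeriesSummable_vonMangoldt (s := ((1 + σ : ℝ) : ℂ)) (by simpa using hσ)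
  have h2 := h.norm
  refine h2.congr fun n => ?_
  rcases eq_or_ne n 0 with rfl | hn
  · simp
  · rw [LSeries.norm_term_eq, if_neg hn]
    simp [abs_of_nonneg vonMangoldt_nonneg]
  
open ArithmeticFunction in
/-- weighted sums of polynomial `x * R(x)` against `vonMangoldt n / n`, `x = n^{-s}`. -/
lemma aux_poly (R : Polynomial ℝ) :
    (∀ s : ℝ, 0 < s → Summable (fun n : ℕ => vonMangoldt n / n * ((n : ℝ) ^ (-s) * R.eval ((n : ℝ) ^ (-s))))) ∧
    Tendsto (fun s : ℝ => s * ∑' n : ℕ, vonMangoldt n / n * ((n : ℝ) ^ (-s) * R.eval ((n : ℝ) ^ (-s))))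
      (nhdsWithin 0 (Set.Ioi 0)) (nhds (∫ x in (0:ℝ)..1, R.eval x)) := by
  induction R using Polynomial.induction_on' with
  | add p q hp hq =>
    have e : ∀ s : ℝ, ∀ n : ℕ, vonMangoldt n / n * ((n : ℝ) ^ (-s) * (p + q).eval ((n : ℝ) ^ (-s))) =
      vonMangoldt n / n * ((n : ℝ) ^ (-s) * p.eval ((n : ℝ) ^ (-s))) +
      vonMangoldt n / n * ((n : ℝ) ^ (-s) * q.eval ((n : ℝ) ^ (-s))) := by
      intro s n; rw [Polynomial.eval_add]; ring
    constructor
    · intro s hs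
      simp_rw [e]
      exact (hp.1 s hs).add (hq.1 s hs)
    · have : ∫ x in (0:ℝ)..1, (p + q).eval x = (∫ x in (0:ℝ)..1, p.eval x) + ∫ x in (0:ℝ)..1, q.eval x := by
        rw [← intervalIntegral.integral_add (p.continuous.intervalIntegrable _ _) (q.continuous.intervalIntegrable _ _)]
        simp
      rw [this]
      refine (hp.2.add hq.2).congr' ?_
      filter_upwards [self_mem_nhdsWithin] with s hs
      simp_rw [e]
      rw [(hp.1 s hs).tsum_add (hq.1 s hs)]
      ring
  | monomial k c =>
    have e : ∀ s : ℝ, ∀ n : ℕ, vonMangoldt n / n * ((n : ℝ) ^ (-s) * (Polynomial.monomial k c).eval ((n : ℝ) ^ (-s))) =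
      c * (vonMangoldt n / (n : ℝ) ^ (1 + (k + 1) * s)) := by
      intro s n
      rcases Nat.eq_zero_or_pos n with rfl | hn
      · simp
      have hn' : (0:ℝ) < n := by exact_mod_cast hn
      rw [Polynomial.eval_monomial, Real.rpow_add hn', Real.rpow_one, ← Real.rpow_natCast, ← Real.rpow_mul hn'.le,
        show ((k:ℝ) + 1) * s = s + k * s by ring, Real.rpow_add hn', Real.rpow_neg hn'.le,
        show -s * k = -(k * s) by ring, Real.rpow_neg hn'.le]
      field_simp
    constructor
    · intro s hs
      simp_rw [e]
      exact (aux_vm_summable _ (by positivity)).mul_left c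
    · simp_rw [e, tsum_mul_left]
      have hi : ∫ x in (0:ℝ)..1, (Polynomial.monomial k c).eval x = c / (k + 1) * 1 := by
        simp [Polynomial.eval_monomial]; rfl
      rw [hi]
      have hs : Tendsto (fun s : ℝ => ((k:ℝ) + 1) * s) (nhdsWithin 0 (Set.Ioi 0)) (nhdsWithin 0 (Set.Ioi 0)) := by
        apply tendsto_nhdsWithin_iff.2
        constructor
        · apply Tendsto.mono_left _ nhdsWithin_le_nhds
          have : Continuous (fun s : ℝ => ((k:ℝ) + 1) * s) := by fun_prop
          simpa using this.tendsto 0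
        · filter_upwards [self_mem_nhdsWithin] with σ hσ
          simp only [Set.mem_Ioi] at hσ ⊢
          positivity
      refine ((aux_vm.comp hs).const_mul (c / (k+1))).congr fun s => ?_
      simp only [Function.comp]
      have : (k:ℝ) + 1 ≠ 0 := by positivity
      field_simp


lemma aux_approx_cont (n : ℝ) (hn : 0 < n) (x : ℝ) (hx : x ∈ Set.Icc (0:ℝ) 1) :
    |(if (1/2 : ℝ) ≤ x then (1:ℝ) else 0) - x - x * (1 - x) *
      ((max x (1 - x))⁻¹ * max (-1) (min 1 (n * (x - 1/2))))| ≤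
      x * (1 - x) * (2 * (1 + (n * x - n / 2) ^ 2)⁻¹) := by
  obtain ⟨h0, h1⟩ := hx
  have tent : ∀ t : ℝ, 0 ≤ t → 1 - min 1 t ≤ (1 + t ^ 2)⁻¹ := by
    intro t ht
    rcases le_total 1 t with h | h
    · rw [min_eq_left h]; simp; positivity
    · rw [min_eq_right h, ← one_div, le_div_iff₀ (by positivity)]
      nlinarith [mul_nonneg ht (sq_nonneg (t - 1)), mul_nonneg ht ht]
  split_ifs with h
  · rw [max_eq_left (by linarith : 1 - x ≤ x)]
    have hσ : max (-1) (min 1 (n * (x - 1/2))) = min 1 (n * (x - 1/2)) := by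
      apply max_eq_right
      apply le_min (by norm_num)
      have : 0 ≤ n * (x - 1/2) := mul_nonneg hn.le (by linarith)
      linarith
    rw [hσ]
    have e : (1:ℝ) - x - x * (1 - x) * (x⁻¹ * min 1 (n * (x - 1/2))) = (1 - x) * (1 - min 1 (n * (x - 1/2))) := by
      have : x ≠ 0 := by linarith
      field_simp
    rw [e, abs_of_nonneg (mul_nonneg (by linarith) (by linarith [min_le_left 1 (n * (x - 1/2))]))]
    have t := tent (n * (x - 1/2)) (mul_nonneg hn.le (by linarith))
    rw [show n * (x - 1/2) = n * x - n / 2 by ring] at t ⊢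
    have hp : 0 ≤ (1 + (n * x - n / 2) ^ 2)⁻¹ := by positivity
    calc (1 - x) * (1 - min 1 (n * x - n / 2)) ≤ (1 - x) * (1 + (n * x - n / 2) ^ 2)⁻¹ :=
          mul_le_mul_of_nonneg_left t (by linarith)
      _ ≤ (1 - x) * ((2 * x) * (1 + (n * x - n / 2) ^ 2)⁻¹) :=
          mul_le_mul_of_nonneg_left (by nlinarith) (by linarith)
      _ = _ := by ring
  · push Not at h
    rw [max_eq_right (by linarith : x ≤ 1 - x)]
    have hneg : n * (x - 1/2) ≤ 0 := mul_nonpos_of_nonneg_of_nonpos hn.le (by linarith)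
    have hσ : max (-1) (min 1 (n * (x - 1/2))) = - min 1 (-(n * (x - 1/2))) := by
      rw [min_eq_right (by linarith), ← max_neg_neg, neg_neg]
    rw [hσ]
    have e : (0:ℝ) - x - x * (1 - x) * ((1 - x)⁻¹ * - min 1 (-(n * (x - 1/2)))) =
        - (x * (1 - min 1 (-(n * (x - 1/2))))) := by
      have : 1 - x ≠ 0 := by linarith
      field_simp
      ring
    rw [e, abs_neg, abs_of_nonneg (mul_nonneg (by linarith) (by linarith [min_le_left 1 (-(n * (x - 1/2)))]))]
    have t := tent (-(n * (x - 1/2))) (by linarith)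
    rw [neg_sq] at t
    rw [show n * (x - 1/2) = n * x - n / 2 by ring] at t ⊢
    have hp : 0 ≤ (1 + (n * x - n / 2) ^ 2)⁻¹ := by positivity
    calc x * (1 - min 1 (-(n * x - n / 2))) ≤ x * (1 + (n * x - n / 2) ^ 2)⁻¹ :=
          mul_le_mul_of_nonneg_left t (by linarith)
      _ ≤ x * ((2 * (1 - x)) * (1 + (n * x - n / 2) ^ 2)⁻¹) :=
          mul_le_mul_of_nonneg_left (by nlinarith) (by linarith)
      _ = _ := by ring

lemma aux_approx (ε : ℝ) (hε : 0 < ε) : ∃ P R : Polynomial ℝ,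
    (∀ x ∈ Set.Icc (0:ℝ) 1, |(if (1/2 : ℝ) ≤ x then (1:ℝ) else 0) - (x + x * (1 - x) * P.eval x)| ≤
      x * (1 - x) * R.eval x) ∧ ∫ x in (0:ℝ)..1, R.eval x < ε := by
  set n : ℝ := 4 * Real.pi / ε with hn
  have hnpos : 0 < n := by positivity
  set δ : ℝ := ε / 8
  have hδ : 0 < δ := by positivity
  have hc1 : Continuous (fun x : ℝ => (max x (1 - x))⁻¹ * max (-1) (min 1 (n * (x - 1/2)))) := by
    apply Continuous.mul
    · apply Continuous.inv₀ (by fun_prop)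
      intro x hx
      have h1 := le_max_left x (1 - x)
      have h2 := le_max_right x (1 - x)
      linarith
    · fun_prop
  have hc2 : Continuous (fun x : ℝ => 2 * (1 + (n * x - n / 2) ^ 2)⁻¹) := by
    apply Continuous.mul (by fun_prop)
    apply Continuous.inv₀ (by fun_prop)
    intro x
    positivity
  obtain ⟨P, hP⟩ := exists_polynomial_near_of_continuousOn 0 1 _ hc1.continuousOn δ hδ
  obtain ⟨Q, hQ⟩ := exists_polynomial_near_of_continuousOn 0 1 _ hc2.continuousOn δ hδ
  refine ⟨P, Q + Polynomial.C (2 * δ), ?_, ?_⟩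
  · intro x hx
    have h := aux_approx_cont n hnpos x hx
    have h1 := abs_lt.1 (hP x hx)
    have h2 := abs_lt.1 (hQ x hx)
    have hxx : 0 ≤ x * (1 - x) := mul_nonneg hx.1 (by linarith [hx.2])
    rw [Polynomial.eval_add, Polynomial.eval_C]
    rw [abs_le] at h ⊢
    constructor <;> nlinarith
  · have hint : ∫ x in (0:ℝ)..1, 2 * (1 + (n * x - n / 2) ^ 2)⁻¹ ≤ 2 * (n⁻¹ * Real.pi) := by
      rw [intervalIntegral.integral_const_mul]
      have := intervalIntegral.integral_comp_mul_sub (a := 0) (b := 1) (fun u : ℝ => (1 + u ^ 2)⁻¹) hnpos.ne' (n / 2)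
      rw [this, integral_inv_one_add_sq, smul_eq_mul]
      have := Real.arctan_lt_pi_div_two (n * 1 - n / 2)
      have := Real.neg_pi_div_two_lt_arctan (n * 0 - n / 2)
      gcongr
      linarith
    have hle : ∫ x in (0:ℝ)..1, (Q + Polynomial.C (2 * δ)).eval x ≤
        ∫ x in (0:ℝ)..1, (2 * (1 + (n * x - n / 2) ^ 2)⁻¹ + 3 * δ) := by
      apply intervalIntegral.integral_mono_on (by norm_num)
      · exact (Polynomial.continuous _).intervalIntegrable _ _
      · exact (hc2.add continuous_const).intervalIntegrable _ _
      · intro x hx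
        have h2 := abs_lt.1 (hQ x hx)
        rw [Polynomial.eval_add, Polynomial.eval_C]
        linarith
    rw [intervalIntegral.integral_add (hc2.intervalIntegrable _ _) (by simp)] at hle
    have : 2 * (n⁻¹ * Real.pi) = ε / 2 := by
      have := Real.pi_pos
      rw [hn]; field_simp; norm_num
    simp only [intervalIntegral.integral_const, smul_eq_mul] at hle
    have : δ = ε / 8 := rfl
    linarith

/-- polynomials without constant term against `b`. -/
lemma aux_poly_b (b : ℕ → ℝ) (L : ℝ)
    (hsum : ∀ s : ℝ, 0 < s → Summable (fun n : ℕ => b n * (n : ℝ) ^ (-s)))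
    (hlim : Tendsto (fun s : ℝ => ∑' n : ℕ, b n * (n : ℝ) ^ (-s)) (nhdsWithin 0 (Set.Ioi 0)) (nhds L))
    (R : Polynomial ℝ) :
    (∀ s : ℝ, 0 < s → Summable (fun n : ℕ => b n * ((n : ℝ) ^ (-s) * R.eval ((n : ℝ) ^ (-s))))) ∧
    Tendsto (fun s : ℝ => ∑' n : ℕ, b n * ((n : ℝ) ^ (-s) * R.eval ((n : ℝ) ^ (-s))))
      (nhdsWithin 0 (Set.Ioi 0)) (nhds (L * R.eval 1)) := by
  induction R using Polynomial.induction_on' with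
  | add p q hp hq =>
    have e : ∀ s : ℝ, ∀ n : ℕ, b n * ((n : ℝ) ^ (-s) * (p + q).eval ((n : ℝ) ^ (-s))) =
      b n * ((n : ℝ) ^ (-s) * p.eval ((n : ℝ) ^ (-s))) +
      b n * ((n : ℝ) ^ (-s) * q.eval ((n : ℝ) ^ (-s))) := by
      intro s n; rw [Polynomial.eval_add]; ring
    constructor
    · intro s hs
      simp_rw [e]
      exact (hp.1 s hs).add (hq.1 s hs)
    · rw [Polynomial.eval_add, mul_add]
      refine (hp.2.add hq.2).congr' ?_
      filter_upwards [self_mem_nhdsWithin] with s hs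
      simp_rw [e]
      rw [(hp.1 s hs).tsum_add (hq.1 s hs)]
  | monomial k c =>
    have e : ∀ s : ℝ, 0 < s → ∀ n : ℕ, b n * ((n : ℝ) ^ (-s) * (Polynomial.monomial k c).eval ((n : ℝ) ^ (-s))) =
      c * (b n * (n : ℝ) ^ (-((k + 1) * s))) := by
      intro s hs n
      have hk : 0 < ((k:ℝ) + 1) * s := by positivity
      rcases Nat.eq_zero_or_pos n with rfl | hn
      · simp only [CharP.cast_eq_zero]
        rw [Real.zero_rpow (by linarith), Real.zero_rpow (by linarith)]; simp
      have hn' : (0:ℝ) < n := by exact_mod_cast hn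
      rw [Polynomial.eval_monomial, ← Real.rpow_natCast, ← Real.rpow_mul hn'.le,
        show -(((k:ℝ) + 1) * s) = -s + -s * k by ring, Real.rpow_add hn']
      ring
    constructor
    · intro s hs
      simp_rw [e s hs]
      exact (hsum _ (by positivity)).mul_left c
    · have hs : Tendsto (fun s : ℝ => ((k:ℝ) + 1) * s) (nhdsWithin 0 (Set.Ioi 0)) (nhdsWithin 0 (Set.Ioi 0)) := by
        apply tendsto_nhdsWithin_iff.2
        constructor
        · apply Tendsto.mono_left _ nhdsWithin_le_nhds
          have : Continuous (fun s : ℝ => ((k:ℝ) + 1) * s) := by fun_prop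
          simpa using this.tendsto 0
        · filter_upwards [self_mem_nhdsWithin] with σ hσ
          simp only [Set.mem_Ioi] at hσ ⊢
          positivity
      rw [Polynomial.eval_monomial, one_pow, mul_one, mul_comm]
      refine ((hlim.comp hs).const_mul c).congr' ?_
      filter_upwards [self_mem_nhdsWithin] with s hs
      simp_rw [e s hs, tsum_mul_left]
      rfl

open ArithmeticFunction in
theorem aux_tauber (b : ℕ → ℝ) (L C : ℝ) (hb0 : b 0 = 0)
    (hb : ∀ n : ℕ, |b n| * Real.log n ≤ C * (vonMangoldt n / n))
    (hsum : ∀ s : ℝ, 0 < s → Summable (fun n : ℕ => b n * (n : ℝ) ^ (-s)))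
    (hlim : Tendsto (fun s : ℝ => ∑' n : ℕ, b n * (n : ℝ) ^ (-s)) (nhdsWithin 0 (Set.Ioi 0)) (nhds L)) :
    Tendsto (fun N : ℕ => ∑ n ∈ Finset.range (N + 1), b n) atTop (nhds L) := by
  -- may assume `C > 0`
  wlog hC : 0 < C generalizing C with H
  · refine H (max C 1) (fun n => (hb n).trans ?_) (by simp)
    exact mul_le_mul_of_nonneg_right (le_max_left _ _) (div_nonneg vonMangoldt_nonneg (Nat.cast_nonneg _))
  rw [Metric.tendsto_atTop']
  intro ε hε
  obtain ⟨P, R, hPR, hR⟩ := aux_approx (ε / 2 / C) (by positivity)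
  set Q : Polynomial ℝ := 1 + (1 - Polynomial.X) * P with hQ
  have hQe : ∀ x : ℝ, x * Q.eval x = x + x * (1 - x) * P.eval x := by
    intro x; simp [hQ]; ring
  have hb1 := aux_poly_b b L hsum hlim Q
  have hQ1 : L * Q.eval 1 = L := by simp [hQ]
  rw [hQ1] at hb1
  have hv := aux_poly R
  have hv2 : ∀ᶠ s in nhdsWithin (0:ℝ) (Set.Ioi 0),
      s * ∑' n : ℕ, vonMangoldt n / n * ((n : ℝ) ^ (-s) * R.eval ((n : ℝ) ^ (-s))) < ε / 2 / C :=
    hv.2.eventually (gt_mem_nhds hR)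
  have hb2 : ∀ᶠ s in nhdsWithin (0:ℝ) (Set.Ioi 0),
      |∑' n : ℕ, b n * ((n : ℝ) ^ (-s) * Q.eval ((n : ℝ) ^ (-s))) - L| < ε / 2 := by
    have := hb1.2.eventually (Metric.ball_mem_nhds L (half_pos hε))
    simpa [Real.dist_eq] using this
  have key : ∀ᶠ s in nhdsWithin (0:ℝ) (Set.Ioi 0),
      |∑' n : ℕ, b n * (if (1/2:ℝ) ≤ (n:ℝ) ^ (-s) then (1:ℝ) else 0) - L| < ε := by
    filter_upwards [hv2, hb2, self_mem_nhdsWithin] with s h1 h2 hs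
    have hs : 0 < s := hs
    set χ : ℝ → ℝ := fun x => if (1/2:ℝ) ≤ x then (1:ℝ) else 0 with hχ
    have hd : ∀ n : ℕ, |b n * χ ((n:ℝ) ^ (-s)) - b n * ((n : ℝ) ^ (-s) * Q.eval ((n : ℝ) ^ (-s)))| ≤
        C * s * (vonMangoldt n / n * ((n : ℝ) ^ (-s) * R.eval ((n : ℝ) ^ (-s)))) := by
      intro n
      rcases Nat.lt_or_ge n 2 with hn | hn
      · interval_cases n
        · simp [hb0]
        · simp [hχ, hQ]
          norm_num
      have hn1 : (1:ℝ) < n := by exact_mod_cast hn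
      have hx0 : 0 < (n:ℝ) ^ (-s) := Real.rpow_pos_of_pos (by linarith) _
      have hx1 : (n:ℝ) ^ (-s) < 1 := Real.rpow_lt_one_of_one_lt_of_neg hn1 (by linarith)
      have hlog : 1 - (n:ℝ) ^ (-s) ≤ s * Real.log n := by
        rw [Real.rpow_def_of_pos (by linarith)]
        have := Real.add_one_le_exp (Real.log n * -s)
        linarith
      have hbn := hb n
      generalize (n:ℝ) ^ (-s) = x at *
      have h := hPR x ⟨hx0.le, hx1.le⟩
      rw [← hQe] at h
      have hxR : 0 ≤ x * R.eval x := by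
        have h' := (abs_nonneg _).trans h
        rw [show x * (1 - x) * R.eval x = (1 - x) * (x * R.eval x) by ring] at h'
        exact nonneg_of_mul_nonneg_right h' (by linarith)
      rw [← mul_sub, abs_mul]
      calc |b n| * |χ x - x * Q.eval x| ≤ |b n| * (x * (1 - x) * R.eval x) :=
            mul_le_mul_of_nonneg_left h (abs_nonneg _)
        _ = (|b n| * (1 - x)) * (x * R.eval x) := by ring
        _ ≤ (|b n| * (s * Real.log n)) * (x * R.eval x) := by gcongr
        _ = (s * (|b n| * Real.log n)) * (x * R.eval x) := by ring
        _ ≤ (s * (C * (vonMangoldt n / n))) * (x * R.eval x) := by gcongr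
        _ = _ := by ring
    have hS := (hv.1 s hs).mul_left (C * s)
    have hdS : Summable (fun n : ℕ => b n * χ ((n:ℝ) ^ (-s)) - b n * ((n : ℝ) ^ (-s) * Q.eval ((n : ℝ) ^ (-s)))) :=
      Summable.of_norm_bounded hS hd
    have hχS : Summable (fun n : ℕ => b n * χ ((n:ℝ) ^ (-s))) := by
      simpa using hdS.add (hb1.1 s hs)
    have hle := tsum_of_norm_bounded (f := fun n : ℕ => b n * χ ((n:ℝ) ^ (-s)) -
      b n * ((n : ℝ) ^ (-s) * Q.eval ((n : ℝ) ^ (-s)))) hS.hasSum hd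
    rw [hχS.tsum_sub (hb1.1 s hs), tsum_mul_left, Real.norm_eq_abs] at hle
    have h3 : C * s * ∑' n : ℕ, vonMangoldt n / n * ((n : ℝ) ^ (-s) * R.eval ((n : ℝ) ^ (-s))) < ε / 2 := by
      rw [lt_div_iff₀ hC] at h1
      linarith
    have := abs_sub_le (∑' n : ℕ, b n * χ ((n:ℝ) ^ (-s)))
      (∑' n : ℕ, b n * ((n : ℝ) ^ (-s) * Q.eval ((n : ℝ) ^ (-s)))) L
    linarith
  have hsN : Tendsto (fun N : ℕ => Real.log 2 / Real.log N) atTop (nhdsWithin (0:ℝ) (Set.Ioi 0)) := by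
    apply tendsto_nhdsWithin_iff.2
    constructor
    · exact Tendsto.div_atTop tendsto_const_nhds (Real.tendsto_log_atTop.comp tendsto_natCast_atTop_atTop)
    · filter_upwards [eventually_gt_atTop 1] with N hN
      have : 0 < Real.log N := Real.log_pos (by exact_mod_cast hN)
      have : 0 < Real.log 2 := Real.log_pos (by norm_num)
      simp only [Set.mem_Ioi]
      positivity
  have fin : ∀ᶠ N : ℕ in atTop, |∑ n ∈ Finset.range (N + 1), b n - L| < ε := by
    filter_upwards [hsN.eventually key, eventually_gt_atTop 1] with N hN hN1
    convert hN using 3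
    have hlog : 0 < Real.log N := Real.log_pos (by exact_mod_cast hN1)
    have hs : 0 < Real.log 2 / Real.log N := div_pos (Real.log_pos (by norm_num)) hlog
    have hNs : (N:ℝ) ^ (-(Real.log 2 / Real.log N)) = 1 / 2 := by
      rw [Real.rpow_def_of_pos (by exact_mod_cast (by lia : 0 < N)), mul_neg, mul_div_cancel₀ _ hlog.ne',
        Real.exp_neg, Real.exp_log (by norm_num)]
      norm_num
    rw [tsum_eq_sum (s := Finset.range (N + 1))]
    · refine Finset.sum_congr rfl fun n hn => ?_
      rcases Nat.eq_zero_or_pos n with rfl | hn0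
      · simp [hb0]
      rw [if_pos, mul_one]
      rw [← hNs]
      apply Real.rpow_le_rpow_of_nonpos (by exact_mod_cast hn0) _ (by linarith)
      exact_mod_cast Nat.lt_succ_iff.1 (Finset.mem_range.1 hn)
    · intro n hn
      rw [if_neg, mul_zero]
      rw [← hNs, not_le]
      apply Real.rpow_lt_rpow_of_neg (by exact_mod_cast (by lia : 0 < N)) _ (by linarith)
      simp only [Finset.mem_range, not_lt] at hn
      exact_mod_cast hn
  rcases eventually_atTop.1 fin with ⟨N, hN⟩
  exact ⟨N, fun n hn => by rw [Real.dist_eq]; exact hN n hn.le⟩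

lemma aux_summable_geom (D : ℕ) : Summable (fun k : ℕ => ((k:ℝ) + 1) ^ D * (1/2 : ℝ) ^ k) := by
  have h := summable_pow_mul_geometric_of_norm_lt_one (R := ℝ) D (r := 1/2) (by norm_num)
  have h2 := ((summable_nat_add_iff 1).2 h).mul_left 2
  refine h2.congr fun k => ?_
  push_cast
  rw [pow_succ]; ring

theorem aux_euler (a : ℕ → ℝ) (D : ℕ) (ha0 : ∀ n, 0 ≤ a n) (h1 : a 1 = 1)
    (hmul : ∀ m n : ℕ, m.Coprime n → a (m * n) = a m * a n)
    (hbd : ∀ p : ℕ, p.Prime → ∀ k : ℕ, a (p ^ k) ≤ ((k:ℝ) + 1) ^ D)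
    (ρ : ℝ) (hρ : 0 < ρ) (hsum : ∀ s : ℝ, 1 < s → Summable (fun n : ℕ => a n * (n:ℝ) ^ (-s)))
    (hlim : Tendsto (fun s : ℝ => (s - 1) * ∑' n : ℕ, a n * (n:ℝ) ^ (-s)) (nhdsWithin 1 (Set.Ioi 1)) (nhds ρ)) :
    ∃ M : ℝ, Tendsto (fun s : ℝ => (∑' p : Nat.Primes, a p * (p:ℝ) ^ (-s)) + Real.log (s - 1))
      (nhdsWithin 1 (Set.Ioi 1)) (nhds M) := by
  set t : Nat.Primes → ℝ → ℕ → ℝ := fun p s k => a (p ^ k) * (((p:ℕ) ^ k : ℕ) : ℝ) ^ (-s) with ht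
  have hp2 : ∀ p : Nat.Primes, (2:ℝ) ≤ p := fun p => by exact_mod_cast p.2.two_le
  have ht0 : ∀ p s k, 0 ≤ t p s k := fun p s k => mul_nonneg (ha0 _) (by positivity)
  have htk : ∀ p s k, 1 ≤ s → t p s k ≤ ((k:ℝ) + 1) ^ D * ((p:ℝ)⁻¹) ^ k := by
    intro p s k hs
    apply mul_le_mul (hbd p p.2 k) _ (by positivity) (by positivity)
    rw [inv_pow, ← Nat.cast_pow, ← Real.rpow_neg_one]
    apply Real.rpow_le_rpow_of_exponent_le _ (by linarith)
    exact_mod_cast Nat.one_le_pow _ _ p.2.pos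
  have hinv : ∀ p : Nat.Primes, ((p:ℝ)⁻¹) ≤ 1/2 := fun p => by
    rw [one_div]; exact inv_anti₀ (by norm_num) (hp2 p)
  have hinv0 : ∀ p : Nat.Primes, 0 < ((p:ℝ)⁻¹) := fun p => by
    have := hp2 p
    positivity
  have htk2 : ∀ p s k, 1 ≤ s → t p s k ≤ ((k:ℝ) + 1) ^ D * (1/2) ^ k := by
    intro p s k hs
    refine (htk p s k hs).trans ?_
    have := hinv p
    have := hinv0 p
    gcongr
  have htS : ∀ p s, 1 ≤ s → Summable (t p s) := fun p s hs =>
    Summable.of_nonneg_of_le (ht0 p s) (fun k => htk2 p s k hs) (aux_summable_geom D)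
  set E : Nat.Primes → ℝ → ℝ := fun p s => ∑' k, t p s k with hE
  have hElim : ∀ p, Tendsto (E p) (nhdsWithin 1 (Set.Ioi 1)) (nhds (E p 1)) := by
    intro p
    apply tendsto_tsum_of_dominated_convergence (aux_summable_geom D)
    · intro k
      apply Tendsto.mono_left _ nhdsWithin_le_nhds
      have hpk : (((p:ℕ) ^ k : ℕ) : ℝ) ≠ 0 := by exact_mod_cast (pow_pos p.2.pos k).ne'
      have : Continuous (fun s : ℝ => a (p ^ k) * (((p:ℕ) ^ k : ℕ) : ℝ) ^ (-s)) := by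
        apply continuous_const.mul
        exact (Real.continuous_const_rpow hpk).comp continuous_neg
      exact this.tendsto 1
    · filter_upwards [self_mem_nhdsWithin] with s hs k
      rw [Real.norm_eq_abs, abs_of_nonneg (ht0 p s k)]
      exact htk2 p s k (le_of_lt hs)
  -- tails
  have hshiftS : Summable (fun j : ℕ => (((j + 2 : ℕ):ℝ) + 1) ^ D * (1/2:ℝ) ^ (j + 2)) :=
    (summable_nat_add_iff 2).2 (aux_summable_geom D)
  set C1 : ℝ := 4 * ∑' j : ℕ, (((j + 2 : ℕ):ℝ) + 1) ^ D * (1/2:ℝ) ^ (j + 2) with hC1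
  have hC10 : 0 ≤ C1 := mul_nonneg (by norm_num) (tsum_nonneg fun j => by positivity)
  have hEsplit : ∀ p s, 1 ≤ s → E p s = 1 + a p * (p:ℝ) ^ (-s) + ∑' j, t p s (j + 2) := by
    intro p s hs
    rw [hE]
    simp only
    rw [← (htS p s hs).sum_add_tsum_nat_add 2]
    simp [Finset.sum_range_succ, ht, h1]
  have htail0 : ∀ p s, 0 ≤ ∑' j, t p s (j + 2) := fun p s => tsum_nonneg fun j => ht0 _ _ _
  have htail : ∀ p s, 1 ≤ s → ∑' j, t p s (j + 2) ≤ C1 * ((p:ℝ)⁻¹) ^ 2 := by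
    intro p s hs
    have hle : ∀ j, t p s (j + 2) ≤ (4 * ((p:ℝ)⁻¹) ^ 2) * ((((j + 2 : ℕ):ℝ) + 1) ^ D * (1/2:ℝ) ^ (j + 2)) := by
      intro j
      refine (htk p s (j + 2) hs).trans ?_
      have := hinv p
      have := hinv0 p
      calc (((j + 2 : ℕ):ℝ) + 1) ^ D * ((p:ℝ)⁻¹) ^ (j + 2)
          = ((p:ℝ)⁻¹) ^ 2 * ((((j + 2 : ℕ):ℝ) + 1) ^ D * ((p:ℝ)⁻¹) ^ j) := by ring
        _ ≤ ((p:ℝ)⁻¹) ^ 2 * ((((j + 2 : ℕ):ℝ) + 1) ^ D * (1/2) ^ j) := by gcongr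
        _ = _ := by ring
    have := Summable.tsum_le_tsum hle ((summable_nat_add_iff 2).2 (htS p s hs)) (hshiftS.mul_left _)
    rw [tsum_mul_left] at this
    rw [hC1]
    linarith
  have hap : ∀ p : Nat.Primes, ∀ s : ℝ, 1 ≤ s → a p * (p:ℝ) ^ (-s) ≤ 2 ^ D * (p:ℝ)⁻¹ := by
    intro p s hs
    have := htk p s 1 hs
    simp only [ht, pow_one, Nat.cast_one] at this
    norm_num at this ⊢
    exact this
  have hap0 : ∀ p : Nat.Primes, ∀ s : ℝ, 0 ≤ a p * (p:ℝ) ^ (-s) := fun p s => mul_nonneg (ha0 _) (by positivity)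
  set C2 : ℝ := 2 ^ D + C1 with hC2
  have hC20 : 0 ≤ C2 := by positivity
  have hlogb : ∀ p : Nat.Primes, ∀ s : ℝ, 1 ≤ s →
      |Real.log (E p s) - a p * (p:ℝ) ^ (-s)| ≤ (C1 + C2 ^ 2) * ((p:ℝ)⁻¹) ^ 2 := by
    intro p s hs
    have e := hEsplit p s hs
    have b1 := htail0 p s
    have b2 := htail p s hs
    have b3 := hap p s hs
    have b4 := hap0 p s
    have i1 := hinv p
    have i0 := hinv0 p
    generalize (∑' j, t p s (j + 2)) = y at *
    generalize a p * (p:ℝ) ^ (-s) = x at *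
    generalize ((p:ℝ)⁻¹) = q at *
    rw [e]
    have hu : x + y ≤ C2 * q := by
      have : C1 * q ^ 2 ≤ C1 * q := by
        apply mul_le_mul_of_nonneg_left _ hC10
        nlinarith
      rw [hC2]; linarith
    have hu2 : (x + y) ^ 2 ≤ C2 ^ 2 * q ^ 2 := by
      rw [← mul_pow]
      exact pow_le_pow_left₀ (by linarith) hu 2
    have hpos : 0 < 1 + x + y := by linarith
    have l1 := Real.log_le_sub_one_of_pos hpos
    have l2 := Real.one_sub_inv_le_log_of_pos hpos
    have l3 : (x + y) - (x + y) ^ 2 ≤ 1 - (1 + x + y)⁻¹ := by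
      have : 1 - (1 + x + y)⁻¹ = (x + y) - (x + y) ^ 2 * (1 + x + y)⁻¹ := by
        field_simp; ring
      rw [this]
      have : (1 + x + y)⁻¹ ≤ 1 := inv_le_one_of_one_le₀ (by linarith)
      nlinarith [sq_nonneg (x + y)]
    rw [abs_le]
    have : 0 ≤ C2 ^ 2 * q ^ 2 := by positivity
    constructor <;> nlinarith
  have hdomS : Summable (fun p : Nat.Primes => (C1 + C2 ^ 2) * ((p:ℝ)⁻¹) ^ 2) := by
    apply Summable.mul_left
    have : Summable (fun n : ℕ => ((n:ℝ)⁻¹) ^ 2) := by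
      simp 
    exact this.comp_injective Nat.Primes.coe_nat_injective
  have hEpos : ∀ p s, 1 ≤ s → 0 < E p s := by
    intro p s hs
    rw [hEsplit p s hs]
    linarith [htail0 p s, hap0 p s]
  have hRlim : Tendsto (fun s => ∑' p : Nat.Primes, (Real.log (E p s) - a p * (p:ℝ) ^ (-s)))
      (nhdsWithin 1 (Set.Ioi 1)) (nhds (∑' p : Nat.Primes, (Real.log (E p 1) - a p * (p:ℝ) ^ (-(1:ℝ))))) := by
    apply tendsto_tsum_of_dominated_convergence hdomS
    · intro p
      apply Tendsto.sub
      · exact (hElim p).log (hEpos p 1 le_rfl).ne'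
      · apply Tendsto.mono_left _ nhdsWithin_le_nhds
        have hpk : (p : ℝ) ≠ 0 := by exact_mod_cast p.2.ne_zero
        have : Continuous (fun s : ℝ => a p * (p : ℝ) ^ (-s)) := by
          apply continuous_const.mul
          exact (Real.continuous_const_rpow hpk).comp continuous_neg
        exact this.tendsto 1
    · filter_upwards [self_mem_nhdsWithin] with s hs p
      exact hlogb p s (le_of_lt hs)
  refine ⟨Real.log ρ - _, ((hlim.log hρ.ne').sub hRlim).congr' ?_⟩
  filter_upwards [self_mem_nhdsWithin] with s hs
  have hs : 1 < s := hs
  have hapS : Summable (fun p : Nat.Primes => a p * (p:ℝ) ^ (-s)) :=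
    (hsum s hs).comp_injective Nat.Primes.coe_nat_injective
  have hRS : Summable (fun p : Nat.Primes => Real.log (E p s) - a p * (p:ℝ) ^ (-s)) :=
    Summable.of_norm_bounded hdomS fun p => hlogb p s hs.le
  have hlS : Summable (fun p : Nat.Primes => Real.log (E p s)) := by
    simpa using hRS.add hapS
  have hprod := EulerProduct.eulerProduct_tprod (f := fun n : ℕ => a n * (n:ℝ) ^ (-s)) (by simp [h1])
    (by
      intro m n hmn
      rw [hmul m n hmn, Nat.cast_mul, Real.mul_rpow (by positivity) (by positivity)]
      ring) (hsum s hs).norm (by simp [Real.zero_rpow (show -s ≠ 0 by linarith)])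
  have hexp := Real.rexp_tsum_eq_tprod (fun p => hEpos p s hs.le) hlS
  have hZ : Real.exp (∑' p : Nat.Primes, Real.log (E p s)) = ∑' n : ℕ, a n * (n:ℝ) ^ (-s) := by
    rw [hexp, ← hprod]
  rw [← hZ, Real.log_mul (by linarith) (Real.exp_pos _).ne', Real.log_exp, hlS.tsum_sub hapS]
  ring

open NumberField in
lemma aux_norm_dvd {K : Type*} [Field K] [NumberField K] (I : Ideal (𝓞 K)) (m n : ℕ)
    (hI : Ideal.absNorm I = m * n) (h : m.Coprime n) :
    Ideal.absNorm (I ⊔ Ideal.span {(m : 𝓞 K)}) ∣ m := by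
  have h1 : Ideal.absNorm (I ⊔ Ideal.span {(m : 𝓞 K)}) ∣ m * n := by
    rw [← hI]; exact Ideal.absNorm_dvd_absNorm_of_le le_sup_left
  have h2 : Ideal.absNorm (I ⊔ Ideal.span {(m : 𝓞 K)}) ∣ m ^ Module.finrank ℤ (𝓞 K) := by
    have := Ideal.absNorm_dvd_absNorm_of_le (le_sup_right : Ideal.span {(m : 𝓞 K)} ≤ I ⊔ Ideal.span {(m : 𝓞 K)})
    rwa [Ideal.absNorm_span_natCast] at this
  have h3 : Nat.Coprime (Ideal.absNorm (I ⊔ Ideal.span {(m : 𝓞 K)})) n :=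
    Nat.Coprime.coprime_dvd_left h2 (h.pow_left _)
  exact h3.dvd_of_dvd_mul_right h1

open NumberField in
lemma aux_cop_sup {K : Type*} [Field K] [NumberField K] (m n : ℕ) (h : m.Coprime n) :
    Ideal.span {(m : 𝓞 K)} ⊔ Ideal.span {(n : 𝓞 K)} = ⊤ := by
  rw [← Ideal.isCoprime_iff_sup_eq, Ideal.isCoprime_span_singleton_iff]
  exact Nat.Coprime.cast h

open NumberField in
lemma aux_mem {K : Type*} [Field K] [NumberField K] (I : Ideal (𝓞 K)) (m : ℕ)
    (hI : Ideal.absNorm I = m) : Ideal.span {(m : 𝓞 K)} ≤ I := by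
  rw [Ideal.span_singleton_le_iff_mem, ← hI]
  exact Ideal.absNorm_mem I

open NumberField in
lemma aux_sup_eq {K : Type*} [Field K] [NumberField K] (I J : Ideal (𝓞 K)) (m n : ℕ) (h : m.Coprime n)
    (hI : Ideal.absNorm I = m) (hJ : Ideal.absNorm J = n) :
    I * J ⊔ Ideal.span {(m : 𝓞 K)} = I := by
  apply le_antisymm
  · exact sup_le Ideal.mul_le_left (aux_mem I m hI)
  · have : J ⊔ Ideal.span {(m : 𝓞 K)} = ⊤ := by
      rw [eq_top_iff, ← aux_cop_sup (K := K) n m h.symm]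
      exact sup_le_sup_right (aux_mem J n hJ) _
    calc I = I * (J ⊔ Ideal.span {(m : 𝓞 K)}) := by rw [this, Ideal.mul_top]
      _ = I * J ⊔ I * Ideal.span {(m : 𝓞 K)} := by rw [Ideal.mul_sup]
      _ ≤ _ := sup_le_sup_left Ideal.mul_le_right _

open NumberField in
lemma aux_card_mul (K : Type*) [Field K] [NumberField K] (m n : ℕ) (h : m.Coprime n) :
    Nat.card {I : Ideal (𝓞 K) // Ideal.absNorm I = m * n} =
      Nat.card {I : Ideal (𝓞 K) // Ideal.absNorm I = m} * Nat.card {I : Ideal (𝓞 K) // Ideal.absNorm I = n} := by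
  have one : Nat.card {I : Ideal (𝓞 K) // Ideal.absNorm I = 1} = 1 := by
    simp [Ideal.absNorm_eq_one_iff]
  rcases Nat.eq_zero_or_pos m with rfl | hm
  · simp only [Nat.coprime_zero_left] at h
    subst h
    rw [one, mul_one, mul_one]
  rcases Nat.eq_zero_or_pos n with rfl | hn
  · simp only [Nat.coprime_zero_right] at h
    subst h
    rw [one, one_mul, one_mul]
  rw [← Nat.card_prod]
  symm
  apply Nat.card_congr
  refine Equiv.ofBijective (fun x => ⟨x.1.1 * x.2.1, by rw [map_mul, x.1.2, x.2.2]⟩) ⟨?_, ?_⟩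
  · rintro ⟨⟨I, hI⟩, ⟨J, hJ⟩⟩ ⟨⟨I', hI'⟩, ⟨J', hJ'⟩⟩ hx
    simp only [Subtype.mk.injEq] at hx
    have e1 : I = I' := by
      rw [← aux_sup_eq I J m n h hI hJ, hx, aux_sup_eq I' J' m n h hI' hJ']
    have e2 : J = J' := by
      rw [← aux_sup_eq J I n m h.symm hJ hI, mul_comm, hx, mul_comm, aux_sup_eq J' I' n m h.symm hJ' hI']
    subst e1 e2
    rfl
  · rintro ⟨I, hI⟩
    have d1 := aux_norm_dvd I m n hI h
    have d2 := aux_norm_dvd I n m (by rw [hI, mul_comm]) h.symm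
    have hprod : (I ⊔ Ideal.span {(m : 𝓞 K)}) * (I ⊔ Ideal.span {(n : 𝓞 K)}) = I := by
      apply le_antisymm
      · rw [Ideal.sup_mul, Ideal.mul_sup]
        refine sup_le (sup_le Ideal.mul_le_left Ideal.mul_le_left) ?_
        · rw [Ideal.mul_sup]
          refine sup_le Ideal.mul_le_right ?_
          rw [Ideal.span_singleton_mul_span_singleton, ← Nat.cast_mul]
          exact aux_mem I _ hI
      · calc I = I * (Ideal.span {(m : 𝓞 K)} ⊔ Ideal.span {(n : 𝓞 K)}) := by
              rw [aux_cop_sup m n h, Ideal.mul_top]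
          _ = Ideal.span {(m : 𝓞 K)} * I ⊔ I * Ideal.span {(n : 𝓞 K)} := by
              rw [Ideal.mul_sup, mul_comm I (Ideal.span {(m : 𝓞 K)})]
          _ ≤ _ := sup_le (Ideal.mul_mono le_sup_right le_sup_left) (Ideal.mul_mono le_sup_left le_sup_right)
    have hnorm := congrArg Ideal.absNorm hprod
    rw [map_mul, hI] at hnorm
    have l1 := Nat.le_of_dvd hm d1
    have l2 := Nat.le_of_dvd hn d2
    have e1 : Ideal.absNorm (I ⊔ Ideal.span {(m : 𝓞 K)}) = m := by
      by_contra hne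
      have := lt_of_le_of_ne l1 hne
      have := Nat.mul_lt_mul_of_lt_of_le this l2 hn
      lia
    have e2 : Ideal.absNorm (I ⊔ Ideal.span {(n : 𝓞 K)}) = n := by
      by_contra hne
      have := lt_of_le_of_ne l2 hne
      have := Nat.mul_lt_mul_of_le_of_lt l1 this hm
      lia
    exact ⟨⟨⟨_, e1⟩, ⟨_, e2⟩⟩, Subtype.ext hprod⟩

open NumberField in
lemma aux_summable (K : Type*) [Field K] [NumberField K] (s : ℝ) (hs : 1 < s) :
    Summable (fun n : ℕ => (Nat.card {I : Ideal (𝓞 K) // Ideal.absNorm I = n} : ℝ) * (n:ℝ) ^ (-s)) := by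
  have h := NumberField.tendsto_sub_one_mul_dedekindZeta_nhdsGT K
  have h0 : ((NumberField.dedekindZeta_residue K : ℝ) : ℂ) ≠ 0 := by
    exact_mod_cast NumberField.dedekindZeta_residue_ne_zero K
  have hne := h.eventually_ne h0
  obtain ⟨r, hr0, hr1, hrs⟩ := (hne.and (Ioo_mem_nhdsGT hs)).exists
  have hS : LSeriesSummable (fun n ↦ (Nat.card {I : Ideal (𝓞 K) // Ideal.absNorm I = n} : ℂ)) r := by
    by_contra hc
    apply hr0
    rw [NumberField.dedekindZeta, LSeries, tsum_eq_zero_of_not_summable hc, mul_zero]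
  have hS2 : LSeriesSummable (fun n ↦ (Nat.card {I : Ideal (𝓞 K) // Ideal.absNorm I = n} : ℂ)) s :=
    hS.of_re_le_re (by simpa using hrs.le)
  refine hS2.norm.congr fun n => ?_
  rcases eq_or_ne n 0 with rfl | hn
  · simp [Real.zero_rpow (show -s ≠ 0 by linarith)]
  · rw [LSeries.norm_term_eq, if_neg hn, Real.rpow_neg (Nat.cast_nonneg _)]
    simp [div_eq_mul_inv]

open NumberField in
lemma aux_limit (K : Type*) [Field K] [NumberField K] :
    Tendsto (fun s : ℝ => (s - 1) * ∑' n : ℕ,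
      (Nat.card {I : Ideal (𝓞 K) // Ideal.absNorm I = n} : ℝ) * (n:ℝ) ^ (-s)) (nhdsWithin 1 (Set.Ioi 1))
      (nhds (NumberField.dedekindZeta_residue K)) := by
  have h := NumberField.tendsto_sub_one_mul_dedekindZeta_nhdsGT K
  have h2 := (Complex.continuous_re.tendsto _).comp h
  simp only [Complex.ofReal_re] at h2
  refine h2.congr' ?_
  filter_upwards [self_mem_nhdsWithin] with s hs
  have hs : 1 < s := hs
  have : NumberField.dedekindZeta K s = ((∑' n : ℕ,
      (Nat.card {I : Ideal (𝓞 K) // Ideal.absNorm I = n} : ℝ) * (n:ℝ) ^ (-s) : ℝ) : ℂ) := by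
    rw [NumberField.dedekindZeta, LSeries, Complex.ofReal_tsum]
    refine tsum_congr fun n => ?_
    rcases eq_or_ne n 0 with rfl | hn
    · simp [Real.zero_rpow (show -s ≠ 0 by linarith)]
    · rw [LSeries.term_of_ne_zero hn, Real.rpow_neg (Nat.cast_nonneg _), Complex.ofReal_mul,
        Complex.ofReal_inv, Complex.ofReal_cpow (Nat.cast_nonneg _)]
      simp [div_eq_mul_inv]
  simp only [Function.comp, this]
  rw [← Complex.ofReal_one, ← Complex.ofReal_sub, ← Complex.ofReal_mul, Complex.ofReal_re]

open NumberField in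
lemma aux_over {K : Type*} [Field K] [NumberField K] (p : ℕ) (hp : p.Prime) (P : Ideal (𝓞 K)) :
    P ∈ Ideal.primesOver (Ideal.span {(p : ℤ)}) (𝓞 K) ↔ P.IsPrime ∧ (p : 𝓞 K) ∈ P := by
  constructor
  · rintro ⟨h1, h2⟩
    refine ⟨h1, ?_⟩
    have : (p : ℤ) ∈ Ideal.under ℤ P := by
      rw [← h2.over]; exact Ideal.mem_span_singleton_self _
    simpa [Ideal.under] using this
  · rintro ⟨h1, h2⟩
    refine ⟨h1, (Ideal.liesOver_span_iff h1.ne_top (Nat.prime_iff_prime_int.mp hp)).mpr ?_⟩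
    simpa using h2

open NumberField in
lemma aux_primes_card (K : Type*) [Field K] [NumberField K] (p : ℕ) (hp : p.Prime) :
    Finite (Ideal.primesOver (Ideal.span {(p : ℤ)}) (𝓞 K)) ∧
    Nat.card (Ideal.primesOver (Ideal.span {(p : ℤ)}) (𝓞 K)) ≤ Module.finrank ℤ (𝓞 K) := by
  have := Fact.mk hp
  have hp0 : Ideal.span {(p : ℤ)} ≠ ⊥ := by simpa using hp.ne_zero
  have hfin : (Ideal.primesOver (Ideal.span {(p : ℤ)}) (𝓞 K)).Finite := by
    rw [← IsDedekindDomain.coe_primesOverFinset hp0]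
    exact Finset.finite_toSet _
  have := hfin.fintype
  refine ⟨inferInstance, ?_⟩
  rw [← Ideal.sum_ramification_inertia_eq_finrank (R := ℤ) (S := 𝓞 K) (Ideal.span {(p : ℤ)}),
    Nat.card_eq_fintype_card, Fintype.card_eq_sum_ones]
  refine Finset.sum_le_sum fun q _ => ?_
  have := q.2.1
  have := q.2.2
  rw [Nat.one_le_iff_ne_zero]
  refine mul_ne_zero ?_ ?_
  · exact (Ideal.ramificationIdx_pos _ _).ne'
  · exact (Ideal.inertiaDeg_pos _ _).ne'

open NumberField UniqueFactorizationMonoid in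
lemma aux_bound_s6 (K : Type*) [Field K] [NumberField K] (p : ℕ) (hp : p.Prime) (k : ℕ) :
    Nat.card {I : Ideal (𝓞 K) // Ideal.absNorm I = p ^ k} ≤ (k + 1) ^ Module.finrank ℤ (𝓞 K) := by
  classical
  obtain ⟨hfin, hcard⟩ := aux_primes_card K p hp
  set S := Ideal.primesOver (Ideal.span {(p : ℤ)}) (𝓞 K) with hS
  have ne0 : ∀ I : Ideal (𝓞 K), Ideal.absNorm I = p ^ k → I ≠ 0 := by
    rintro I hI rfl
    have : p ^ k ≠ 0 := pow_ne_zero _ hp.ne_zero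
    exact this (by rw [← hI]; simp)
  have hcount : ∀ I : Ideal (𝓞 K), Ideal.absNorm I = p ^ k → ∀ P ∈ S,
      (normalizedFactors I).count P < k + 1 := by
    intro I hI P hP
    have hdvd : P ^ (normalizedFactors I).count P ∣ I := by
      conv_rhs => rw [← associated_iff_eq.mp (prod_normalizedFactors (ne0 I hI))]
      rw [← Multiset.prod_replicate]
      exact Multiset.prod_dvd_prod_of_le (Multiset.le_count_iff_replicate_le.mp le_rfl)
    have h1 := map_dvd Ideal.absNorm hdvd
    rw [map_pow, hI] at h1
    have h2 : p ∣ Ideal.absNorm P := by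
      have h3 : Ideal.absNorm P ∣ p ^ Module.finrank ℤ (𝓞 K) := by
        have := Ideal.absNorm_dvd_absNorm_of_le ((Ideal.span_singleton_le_iff_mem (I := P)).mpr ((aux_over p hp P).mp hP).2)
        rwa [Ideal.absNorm_span_natCast] at this
      obtain ⟨j, -, hj⟩ := (Nat.dvd_prime_pow hp).mp h3
      rw [hj]
      refine dvd_pow_self _ ?_
      rintro rfl
      rw [pow_zero, Ideal.absNorm_eq_one_iff] at hj
      exact hP.1.ne_top hj
    have h4 := (Nat.pow_dvd_pow_iff_le_right hp.one_lt).mp ((pow_dvd_pow_of_dvd h2 _).trans h1)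
    omega
  let f : {I : Ideal (𝓞 K) // Ideal.absNorm I = p ^ k} → (S → Fin (k + 1)) :=
    fun I P => ⟨(normalizedFactors I.1).count P.1, hcount I.1 I.2 P.1 P.2⟩
  have hf : Function.Injective f := by
    rintro ⟨I, hI⟩ ⟨J, hJ⟩ h
    have key : ∀ I : Ideal (𝓞 K), Ideal.absNorm I = p ^ k → ∀ P ∉ S, (normalizedFactors I).count P = 0 := by
      intro I hI P hP
      rw [Multiset.count_eq_zero]
      intro hmem
      apply hP
      have hpr := prime_of_normalized_factor P hmem
      have hPr := Ideal.isPrime_of_prime hpr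
      refine (aux_over p hp P).mpr ⟨hPr, ?_⟩
      have : ((p ^ k : ℕ) : 𝓞 K) ∈ P := by
        have := Ideal.absNorm_mem I
        rw [hI] at this
        exact Ideal.le_of_dvd (dvd_of_mem_normalizedFactors hmem) this
      rw [Nat.cast_pow] at this
      exact hPr.mem_of_pow_mem _ this
    have e : normalizedFactors I = normalizedFactors J := by
      ext P
      by_cases hP : P ∈ S
      · have := congrFun h ⟨P, hP⟩
        simpa [f] using this
      · rw [key I hI P hP, key J hJ P hP]
    apply Subtype.ext
    change I = J
    rw [← associated_iff_eq.mp (prod_normalizedFactors (ne0 I hI)), e,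
      associated_iff_eq.mp (prod_normalizedFactors (ne0 J hJ))]
  calc _ ≤ Nat.card (S → Fin (k + 1)) := Nat.card_le_card_of_injective f hf
    _ = (k + 1) ^ Nat.card S := by rw [Nat.card_fun, Nat.card_fin]
    _ ≤ _ := Nat.pow_le_pow_right (by omega) hcard

open NumberField Polynomial in
lemma aux_kummer {K : Type*} [Field K] [NumberField K] (θ : 𝓞 K) (p : ℕ) (hp : p.Prime)
    (h : ¬ p ∣ RingOfIntegers.exponent θ) :
    Nat.card {I : Ideal (𝓞 K) // Ideal.absNorm I = p} =
      ((Finset.range p).filter fun x : ℕ => (p : ℤ) ∣ (minpoly ℤ θ).eval (x : ℤ)).card := by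
  classical
  have hfact := Fact.mk hp
  set g := minpoly ℤ θ with hg
  set G := g.map (Int.castRingHom (ZMod p)) with hG
  have hgm : g.Monic := minpoly.monic θ.isIntegral
  have hG0 : G ≠ 0 := (hgm.map _).ne_zero
  have e1 : Nat.card {I : Ideal (𝓞 K) // Ideal.absNorm I = p} = Nat.card {c : ZMod p // G.IsRoot c} := by
    symm
    have hmem : ∀ c : ZMod p, G.IsRoot c → (X - C c) ∈ RingOfIntegers.monicFactorsMod θ p := by
      intro c hc
      rw [Multiset.mem_toFinset, Polynomial.mem_normalizedFactors_iff hG0]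
      exact ⟨irreducible_X_sub_C c, monic_X_sub_C c, dvd_iff_isRoot.mpr hc⟩
    let E := NumberField.Ideal.primesOverSpanEquivMonicFactorsMod h
    have hnorm : ∀ P : Ideal.primesOver (Ideal.span {(p : ℤ)}) (𝓞 K),
        Ideal.absNorm P.1 = p ^ (E P).1.natDegree := by
      intro P
      have := P.2.1
      have := P.2.2
      rw [← Ideal.pow_inertiaDeg p P.1]
      congr 1
      have h3 := NumberField.Ideal.inertiaDeg_primesOverSpanEquivMonicFactorsMod_symm_apply' h (E P).2
      rw [← h3]
      congr 2
      exact (E.symm_apply_apply P).symm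
    refine Nat.card_congr (Equiv.ofBijective
      (fun c => ⟨(E.symm ⟨X - C c.1, hmem c.1 c.2⟩).1, ?_⟩) ⟨?_, ?_⟩)
    · rw [hnorm, E.apply_symm_apply]; simp
    · rintro ⟨c, hc⟩ ⟨d, hd⟩ hcd
      simp only [Subtype.mk.injEq] at hcd
      have h4 := congrArg Subtype.val (E.symm.injective (Subtype.ext hcd))
      simp only at h4
      apply Subtype.ext
      simpa using h4
    · rintro ⟨I, hI⟩
      have hpr : I.IsPrime := Ideal.isPrime_of_irreducible_absNorm (by rw [hI]; exact hp)
      have hIm : I ∈ Ideal.primesOver (Ideal.span {(p : ℤ)}) (𝓞 K) :=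
        (aux_over p hp I).mpr ⟨hpr, by have := Ideal.absNorm_mem I; rwa [hI] at this⟩
      have h5 := hnorm ⟨I, hIm⟩
      set Q := E ⟨I, hIm⟩ with hQ
      have h6 := Q.2
      rw [Multiset.mem_toFinset, Polynomial.mem_normalizedFactors_iff hG0] at h6
      have hdeg : Q.1.natDegree = 1 := by
        have : p ^ 1 = p ^ Q.1.natDegree := by rw [pow_one, ← h5, hI]
        exact (Nat.pow_right_injective hp.two_le this).symm
      have hQX : Q.1 = X - C (-(Q.1.coeff 0)) := by
        rw [C_neg, sub_neg_eq_add]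
        exact h6.2.1.eq_X_add_C hdeg
      refine ⟨⟨-(Q.1.coeff 0), ?_⟩, ?_⟩
      · rw [← dvd_iff_isRoot, ← hQX]; exact h6.2.2
      · apply Subtype.ext
        have : E.symm Q = ⟨I, hIm⟩ := E.symm_apply_apply _
        have h7 := congrArg Subtype.val this
        simp only at h7 ⊢
        rw [← h7]
        congr 2
        exact Subtype.ext hQX.symm
  rw [e1, Nat.card_eq_fintype_card, Fintype.card_subtype]
  symm
  have key : ∀ x : ℕ, ((p : ℤ) ∣ g.eval (x : ℤ)) ↔ G.IsRoot (x : ZMod p) := by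
    intro x
    rw [IsRoot, hG, eval_map, ← ZMod.intCast_zmod_eq_zero_iff_dvd]
    have : ((x : ℕ) : ZMod p) = Int.castRingHom (ZMod p) (x : ℤ) := by simp
    rw [this, eval₂_at_apply]
    simp
  refine Finset.card_bij (fun x _ => (x : ZMod p)) ?_ ?_ ?_
  · intro x hx
    rw [Finset.mem_filter] at hx ⊢
    exact ⟨Finset.mem_univ _, (key x).mp hx.2⟩
  · intro x hx y hy hxy
    rw [Finset.mem_filter, Finset.mem_range] at hx hy
    rw [ZMod.natCast_eq_natCast_iff] at hxy
    exact Nat.ModEq.eq_of_lt_of_lt hxy hx.1 hy.1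
  · intro c hc
    rw [Finset.mem_filter] at hc
    refine ⟨c.val, ?_, ZMod.natCast_zmod_val c⟩
    rw [Finset.mem_filter, Finset.mem_range, key, ZMod.natCast_zmod_val]
    exact ⟨ZMod.val_lt c, hc.2⟩

open NumberField Polynomial in
lemma aux_field (g : Polynomial ℤ) (hm : g.Monic) (hirr : Irreducible g) :
    ∃ (K : Type) (_ : Field K) (_ : NumberField K) (θ : 𝓞 K), minpoly ℤ θ = g ∧
      RingOfIntegers.exponent θ ≠ 0 := by
  have hq : Irreducible (g.map (algebraMap ℤ ℚ)) :=
    (Polynomial.Monic.irreducible_iff_irreducible_map_fraction_map hm).mp hirr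
  have hfact := Fact.mk hq
  have hqm : (g.map (algebraMap ℤ ℚ)).Monic := hm.map _
  let K := AdjoinRoot (g.map (algebraMap ℤ ℚ))
  have : FiniteDimensional ℚ K := (AdjoinRoot.powerBasis hq.ne_zero).finite
  have : NumberField K := { to_charZero := algebraRat.charZero K, to_finiteDimensional := this }
  let α : K := AdjoinRoot.root (g.map (algebraMap ℤ ℚ))
  have hroot : aeval α g = 0 := by
    have := AdjoinRoot.aeval_eq (f := g.map (algebraMap ℤ ℚ)) (g.map (algebraMap ℤ ℚ))
    rw [AdjoinRoot.mk_self, aeval_map_algebraMap] at this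
    exact this
  have hint : IsIntegral ℤ α := ⟨g, hm, hroot⟩
  let θ : 𝓞 K := ⟨α, hint⟩
  have hmin : minpoly ℤ α = g := by
    have h1 : minpoly ℚ α = g.map (algebraMap ℤ ℚ) :=
      (minpoly.eq_of_irreducible_of_monic hq (by rw [aeval_map_algebraMap]; exact hroot) hqm).symm
    rw [minpoly.isIntegrallyClosed_eq_field_fractions' ℚ hint] at h1
    exact Polynomial.map_injective _ (algebraMap ℤ ℚ).injective_int h1
  have hminθ : minpoly ℤ θ = g := by
    exact (minpoly.algebraMap_eq (B := 𝓞 K) (B' := K) RingOfIntegers.coe_injective θ).symm.trans hmin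
  refine ⟨K, inferInstance, this, θ, hminθ, ?_⟩
  have hadj : Algebra.adjoin ℚ {algebraMap (𝓞 K) K θ} = ⊤ := AdjoinRoot.adjoinRoot_eq_top
  have hc := conductor_mul_differentIdeal ℤ ℚ K θ hadj
  have hne : aeval θ (derivative (minpoly ℤ θ)) ≠ 0 := by
    intro h0
    have hdvd := minpoly.isIntegrallyClosed_dvd θ.isIntegral h0
    have := Polynomial.natDegree_le_of_dvd hdvd ?_
    · have h2 : 0 < (minpoly ℤ θ).natDegree := minpoly.natDegree_pos θ.isIntegral
      have h3 := Polynomial.natDegree_derivative_lt h2.ne'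
      omega
    · intro h4
      have h2 : 0 < (minpoly ℤ θ).natDegree := minpoly.natDegree_pos θ.isIntegral
      have := Polynomial.derivative_eq_zero.mp h4
      omega
  have hcb : conductor ℤ θ ≠ ⊥ := by
    intro hb
    rw [hb, Ideal.bot_mul] at hc
    exact hne (Ideal.span_singleton_eq_bot.mp hc.symm)
  rw [RingOfIntegers.exponent, Ne, Ideal.absNorm_eq_zero_iff]
  intro hb
  exact hcb (Ideal.eq_bot_of_comap_eq_bot hb)

lemma aux_primes_tsum (c : ℕ → ℝ) (s : ℝ) :
    ∑' p : Nat.Primes, c p * (p:ℝ) ^ (-(1 + s)) =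
      ∑' n : ℕ, (if n.Prime then c n / n else 0) * (n:ℝ) ^ (-s) := by
  have h := tsum_subtype {p : ℕ | p.Prime} (fun n => c n * (n:ℝ) ^ (-(1 + s)))
  refine Eq.trans h (tsum_congr fun n => ?_)
  by_cases hn : n.Prime
  · have h0 : (0:ℝ) < n := by exact_mod_cast hn.pos
    rw [Set.indicator_of_mem (by exact hn), if_pos hn, neg_add, Real.rpow_add h0, Real.rpow_neg_one]
    ring
  · rw [Set.indicator_of_notMem (by exact hn), if_neg hn, zero_mul]

lemma aux_primes_summable (c : ℕ → ℝ) (s : ℝ)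
    (h : Summable fun n : ℕ => c n * (n:ℝ) ^ (-(1 + s))) :
    Summable fun n : ℕ => (if n.Prime then c n / n else 0) * (n:ℝ) ^ (-s) := by
  refine (h.indicator {p : ℕ | p.Prime}).congr fun n => ?_
  by_cases hn : n.Prime
  · have h0 : (0:ℝ) < n := by exact_mod_cast hn.pos
    rw [Set.indicator_of_mem (by exact hn), if_pos hn, neg_add, Real.rpow_add h0, Real.rpow_neg_one]
    ring
  · rw [Set.indicator_of_notMem (by exact hn), if_neg hn, zero_mul]

lemma aux_shift : Tendsto (fun s : ℝ => 1 + s) (nhdsWithin 0 (Set.Ioi 0)) (nhdsWithin 1 (Set.Ioi 1)) := by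
  refine tendsto_nhdsWithin_iff.mpr ⟨?_, ?_⟩
  · have : Tendsto (fun s : ℝ => 1 + s) (nhds 0) (nhds (1 + 0)) :=
      (continuous_const.add continuous_id).tendsto 0
    rw [add_zero] at this
    exact this.mono_left nhdsWithin_le_nhds
  · filter_upwards [self_mem_nhdsWithin] with s hs
    have : (0:ℝ) < s := hs
    simpa using this

lemma aux_euler_one : ∃ M, Tendsto (fun s : ℝ => (∑' p : Nat.Primes, (1:ℝ) * (p:ℝ)^(-s)) + Real.log (s-1))
    (nhdsWithin 1 (Set.Ioi 1)) (nhds M) := by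
  refine aux_euler (fun _ => 1) 0 (fun _ => zero_le_one) rfl (fun _ _ _ => (one_mul 1).symm)
    (fun _ _ _ => by simp) 1 one_pos ?_ ?_
  · intro s hs
    simp only [one_mul]
    exact Real.summable_nat_rpow.mpr (by linarith)
  · refine tendsto_sub_mul_tsum_nat_rpow.congr fun s => ?_
    congr 1
    refine tsum_congr fun n => ?_
    rw [Real.rpow_neg (Nat.cast_nonneg _), one_mul, one_div]

open NumberField in
lemma aux_euler_K (K : Type) [Field K] [NumberField K] :
    ∃ M, Tendsto (fun s : ℝ => (∑' p : Nat.Primes,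
        (Nat.card {I : Ideal (𝓞 K) // Ideal.absNorm I = p} : ℝ) * (p:ℝ)^(-s)) + Real.log (s-1))
      (nhdsWithin 1 (Set.Ioi 1)) (nhds M) := by
  refine aux_euler (fun n => (Nat.card {I : Ideal (𝓞 K) // Ideal.absNorm I = n} : ℝ))
    (Module.finrank ℤ (𝓞 K)) (fun _ => Nat.cast_nonneg _) ?_ ?_ ?_ _
    (NumberField.dedekindZeta_residue_pos K) (aux_summable K) (aux_limit K)
  · simp [Ideal.absNorm_eq_one_iff]
  · intro m n h
    rw [aux_card_mul K m n h, Nat.cast_mul]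
  · intro p hp k
    exact_mod_cast aux_bound_s6 K p hp k

/-- For a monic irreducible `g ∈ ℤ[x]`, writing `ω(p)` for the number of roots of `g`
modulo `p`, the sum `∑_p (ω(p) − 1)/p` over primes converges. -/
theorem sum_omega_sub_one_div_p_converges (g : Polynomial ℤ) (hm : g.Monic)
    (hirr : Irreducible g) :
    ∃ L : ℝ, Tendsto (fun N : ℕ =>
        ∑ p ∈ (Finset.range (N + 1)).filter Nat.Prime,
          ((((Finset.range p).filter fun x : ℕ => (p : ℤ) ∣ g.eval (x : ℤ)).card : ℝ) - 1) / p)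
      atTop (nhds L) := by
  obtain ⟨K, _, _, θ, hθ, he⟩ := aux_field g hm hirr
  obtain ⟨M1, h1⟩ := aux_euler_K K
  obtain ⟨M2, h2⟩ := aux_euler_one
  set w : ℕ → ℝ := fun p => (((Finset.range p).filter fun x : ℕ => (p : ℤ) ∣ g.eval (x : ℤ)).card : ℝ) with hw
  set a : ℕ → ℝ := fun n =>
    (Nat.card {I : Ideal (NumberField.RingOfIntegers K) // Ideal.absNorm I = n} : ℝ) with ha
  set e := RingOfIntegers.exponent θ with hedef
  set D := Module.finrank ℤ (NumberField.RingOfIntegers K) with hD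
  have haw : ∀ p : ℕ, p.Prime → ¬ p ∣ e → a p = w p := by
    intro p hp hpe
    have := aux_kummer θ p hp hpe
    rw [hθ] at this
    simp only [ha, hw, this]
  let b : ℕ → ℝ := fun n => if n.Prime then (w n - 1) / n else 0
  let ba : ℕ → ℝ := fun n => if n.Prime then a n / n else 0
  let b1 : ℕ → ℝ := fun n => if n.Prime then (1:ℝ) / n else 0
  let d : ℕ → ℝ := fun n => if n.Prime then (w n - a n) / n else 0
  have hbd : ∀ n, b n = ba n - b1 n + d n := by
    intro n
    simp only [b, ba, b1, d]
    split_ifs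
    · ring
    · ring
  have hd0 : ∀ n ∉ e.primeFactors, d n = 0 := by
    intro n hn
    simp only [d]
    split_ifs with hp
    · have : ¬ n ∣ e := fun h => hn (Nat.mem_primeFactors.mpr ⟨hp, h, he⟩)
      rw [haw n hp this, sub_self, zero_div]
    · rfl
  have hwC : ∀ p : ℕ, p.Prime → |w p - 1| ≤ 2 ^ D + e := by
    intro p hp
    have hw0 : 0 ≤ w p := Nat.cast_nonneg _
    have hD1 : (1:ℝ) ≤ 2 ^ D := one_le_pow₀ (by norm_num)
    have he0 : (0:ℝ) ≤ e := Nat.cast_nonneg _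
    have hup : w p ≤ 2 ^ D + e := by
      by_cases hpe : p ∣ e
      · have h3 : p ≤ e := Nat.le_of_dvd (Nat.pos_of_ne_zero he) hpe
        have h4 : w p ≤ p := by
          have := Finset.card_filter_le (Finset.range p) (fun x : ℕ => (p : ℤ) ∣ g.eval (x : ℤ))
          rw [Finset.card_range] at this
          simp only [hw]
          exact_mod_cast this
        have h5 : (p:ℝ) ≤ e := by exact_mod_cast h3
        linarith
      · rw [← haw p hp hpe]
        have := aux_bound_s6 K p hp 1
        rw [pow_one] at this
        have h6 : a p ≤ (1 + 1) ^ D := by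
          simp only [ha]
          exact_mod_cast this
        norm_num at h6
        linarith
    rw [abs_le]
    constructor <;> linarith
  have sa : ∀ s : ℝ, 0 < s → Summable fun n : ℕ => ba n * (n:ℝ) ^ (-s) := fun s hs =>
    aux_primes_summable a s (aux_summable K (1 + s) (by linarith))
  have s1 : ∀ s : ℝ, 0 < s → Summable fun n : ℕ => b1 n * (n:ℝ) ^ (-s) := fun s hs =>
    aux_primes_summable (fun _ => 1) s (by
      simp only [one_mul]
      exact Real.summable_nat_rpow.mpr (by linarith))
  have hd1 : ∀ s : ℝ, ∀ n ∉ e.primeFactors, d n * (n:ℝ) ^ (-s) = 0 := fun s n hn => by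
    rw [hd0 n hn, zero_mul]
  have sd : ∀ s : ℝ, Summable fun n : ℕ => d n * (n:ℝ) ^ (-s) := fun s =>
    summable_of_ne_finset_zero (s := e.primeFactors) (hd1 s)
  have hexp : ∀ s : ℝ, ∀ n : ℕ, b n * (n:ℝ) ^ (-s) =
      ba n * (n:ℝ) ^ (-s) - b1 n * (n:ℝ) ^ (-s) + d n * (n:ℝ) ^ (-s) := by
    intro s n
    rw [hbd]; ring
  have hb := aux_tauber b (M1 - M2 + ∑ n ∈ e.primeFactors, d n) (2 ^ D + e) (by simp [b]) ?_ ?_ ?_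
  · refine ⟨_, hb.congr fun N => ?_⟩
    rw [Finset.sum_filter]
  · intro n
    simp only [b]
    split_ifs with hn
    · rw [ArithmeticFunction.vonMangoldt_apply_prime hn, abs_div, Nat.abs_cast]
      have hl : 0 ≤ Real.log n / n := div_nonneg (Real.log_natCast_nonneg n) (Nat.cast_nonneg n)
      calc |w n - 1| / n * Real.log n = |w n - 1| * (Real.log n / n) := by ring
        _ ≤ _ := mul_le_mul_of_nonneg_right (hwC n hn) hl
    · rw [abs_zero, zero_mul]
      have := ArithmeticFunction.vonMangoldt_nonneg (n := n)
      positivity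
  · intro s hs
    simp only [hexp s]
    exact ((sa s hs).sub (s1 s hs)).add (sd s)
  · have t1 := (h1.comp aux_shift).sub (h2.comp aux_shift)
    have t2 : Tendsto (fun s : ℝ => ∑ n ∈ e.primeFactors, d n * (n:ℝ) ^ (-s))
        (nhdsWithin 0 (Set.Ioi 0)) (nhds (∑ n ∈ e.primeFactors, d n)) := by
      refine tendsto_finsetSum _ fun n hn => ?_
      have hn0 : (n:ℝ) ≠ 0 := by
        exact_mod_cast (Nat.prime_of_mem_primeFactors hn).ne_zero
      have hc : Continuous fun s : ℝ => d n * (n:ℝ) ^ (-s) :=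
        continuous_const.mul ((Real.continuous_const_rpow hn0).comp continuous_neg)
      have := hc.tendsto 0
      simp only [neg_zero, Real.rpow_zero, mul_one] at this
      exact this.mono_left nhdsWithin_le_nhds
    refine (t1.add t2).congr' ?_
    filter_upwards [self_mem_nhdsWithin] with s hs
    have hs : 0 < s := hs
    simp only [hexp s, Function.comp]
    rw [((sa s hs).sub (s1 s hs)).tsum_add (sd s), (sa s hs).tsum_sub (s1 s hs),
      tsum_eq_sum (hd1 s)]
    have ea := aux_primes_tsum a s
    have e1 := aux_primes_tsum (fun _ => 1) s
    rw [ea, e1]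
    simp only [ba, b1]
    ring
end
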